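/- arXiv:1712.04916 — 2 statements merged into one kernel-verified Lean document; each statement's English description precedes it below -/
import Mathlib

section
/- Let n ≥ 1 and let s ∈ ℂⁿ have pairwise distinct entries with Re(s_j − s_{j+1}) ≥ 2 for all j = 1,…,n−1. Then f_n(s, D(1)) = (∏_{j=0}^{n−1} (2j)!/j!) / ∏_{1≤k<l≤n} 2·(s_k − s_l − 1). -/
open MeasureTheory Matrix
open scoped BigOperators

noncomputable section

instance matrixMeasurableSpace {l : Type*} [Fintype l] : MeasurableSpace (Matrix l l ℝ) :=
  inferInstanceAs (MeasurableSpace (l → l → ℝ))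

/-- The orthogonal group `O(m)` as a subtype of `m × m` real matrices. -/
abbrev OG (m : ℕ) := Matrix.orthogonalGroup (Fin m) ℝ

/-- `t ^ w` for a real `t ≥ 0` and complex `w`, with the convention `0 ^ w = 0`. -/
def cpw (t : ℝ) (w : ℂ) : ℂ := if t = 0 then 0 else Complex.exp (w * Real.log t)

/-- The `2n × 2n` real antisymmetric matrix `D(a) = diag(a₁ J, …, aₙ J)`,
`J = [[0,1],[-1,0]]`. -/
def Dmat {n : ℕ} (a : Fin n → ℝ) : Matrix (Fin (2 * n)) (Fin (2 * n)) ℝ :=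
  Matrix.of fun i j =>
    if i.val / 2 = j.val / 2 then
      a ⟨i.val / 2, by have := i.isLt; omega⟩ *
        (if i.val % 2 = 0 ∧ j.val % 2 = 1 then 1
          else if i.val % 2 = 1 ∧ j.val % 2 = 0 then -1 else 0)
    else 0

/-- Vandermonde product `Δ_m(x) = ∏_{j<k} (x_k - x_j)`. -/
def vdm {m : ℕ} {R : Type*} [CommRing R] (x : Fin m → R) : R :=
  ∏ p ∈ Finset.univ.filter (fun p : Fin m × Fin m => p.1 < p.2), (x p.2 - x p.1)

/-- `s_{n+1} := -n-1` convention: the `j`-th exponent `(s_j - s_{j+1})/2 - 1`. -/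
def expo (n : ℕ) (s : Fin n → ℂ) (j : Fin n) : ℂ :=
  (s j - (if h : j.val + 1 < n then s ⟨j.val + 1, h⟩ else -(n : ℂ) - 1)) / 2 - 1

/-- The spherical-type group integral
`f_n(s,X) = ∫_{O(2n)} ∏_j det((kXkᵀ)_{[2j]})^{(s_j-s_{j+1})/2-1} d*k`. -/
def sphInt (n : ℕ) (μ : Measure (OG (2 * n))) (s : Fin n → ℂ)
    (X : Matrix (Fin (2 * n)) (Fin (2 * n)) ℝ) : ℂ :=
  ∫ k : OG (2 * n), ∏ j : Fin n,
    cpw ((((k : Matrix (Fin (2 * n)) (Fin (2 * n)) ℝ) * X *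
        (k : Matrix (Fin (2 * n)) (Fin (2 * n)) ℝ)ᵀ).submatrix
          (Fin.castLE (by have := j.isLt; omega : 2 * (j.val + 1) ≤ 2 * n))
          (Fin.castLE (by have := j.isLt; omega : 2 * (j.val + 1) ≤ 2 * n))).det)
      (expo n s j) ∂μ


instance instBorelMat (m : ℕ) : BorelSpace (Matrix (Fin m) (Fin m) ℝ) :=
  inferInstanceAs (BorelSpace (Fin m → Fin m → ℝ))

instance instSCMat (m : ℕ) : SecondCountableTopology (Matrix (Fin m) (Fin m) ℝ) :=
  inferInstanceAs (SecondCountableTopology (Fin m → Fin m → ℝ))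

instance instSCOG (m : ℕ) : SecondCountableTopology (OG m) :=
  TopologicalSpace.Subtype.secondCountableTopology (OG m : Set (Matrix (Fin m) (Fin m) ℝ))

instance instCompactOG (m : ℕ) : CompactSpace (OG m) := by
  refine (isCompact_iff_compactSpace (s := (OG m : Set (Matrix (Fin m) (Fin m) ℝ)))).mp ?_
  have h1 : IsClosed (OG m : Set (Matrix (Fin m) (Fin m) ℝ)) := by
    have : (OG m : Set (Matrix (Fin m) (Fin m) ℝ)) = {A | A * star A = 1} := by
      ext A
      exact Matrix.mem_orthogonalGroup_iff _ _
    rw [this]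
    exact isClosed_eq (by fun_prop) continuous_const
  have h2 : IsCompact (Set.univ.pi fun _ : Fin m => Set.univ.pi fun _ : Fin m =>
      Set.Icc (-1 : ℝ) 1) :=
    isCompact_univ_pi fun _ => isCompact_univ_pi fun _ => isCompact_Icc
  refine IsCompact.of_isClosed_subset h2 h1 ?_
  intro A hA i _ j _
  have := entry_norm_bound_of_unitary hA i j
  rw [Real.norm_eq_abs] at this
  exact abs_le.mp this

instance instMeasMulOG (m : ℕ) : MeasurableMul₂ (OG m) := inferInstance

/-- Haar probability measure on `O(m)`. -/
def hO (m : ℕ) : Measure (OG m) := Measure.haarMeasure ⊤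

instance instHaarhO (m : ℕ) : (hO m).IsHaarMeasure := by unfold hO; infer_instance

instance instProbhO (m : ℕ) : IsProbabilityMeasure (hO m) :=
  ⟨by
    have := Measure.haarMeasure_self (K₀ := (⊤ : TopologicalSpace.PositiveCompacts (OG m)))
    simpa [hO] using this⟩

instance instRIhO (m : ℕ) : (hO m).IsMulRightInvariant := by
  refine ⟨fun g => ?_⟩
  have : IsProbabilityMeasure (Measure.map (· * g) (hO m)) :=
    Measure.isProbabilityMeasure_map (measurable_mul_const g).aemeasurable
  exact Measure.isHaarMeasure_eq_of_isProbabilityMeasure _ _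

theorem eq_hO (m : ℕ) (μ : Measure (OG m)) (hμ : μ.IsHaarMeasure) (hμ1 : IsProbabilityMeasure μ) :
    μ = hO m :=
  Measure.isHaarMeasure_eq_of_isProbabilityMeasure _ _


/-- leading block -/
def ld {m r : ℕ} (h : r ≤ m) (X : Matrix (Fin m) (Fin m) ℝ) : Matrix (Fin r) (Fin r) ℝ :=
  X.submatrix (Fin.castLE h) (Fin.castLE h)

theorem ld_mul_left {m r : ℕ} (h : r ≤ m) (T Y : Matrix (Fin m) (Fin m) ℝ)
    (hT : ∀ i j, i < j → T i j = 0) : ld h (T * Y) = ld h T * ld h Y := by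
  ext i j
  simp only [ld, Matrix.submatrix_apply, Matrix.mul_apply]
  obtain ⟨d, rfl⟩ := Nat.exists_eq_add_of_le h
  rw [Fin.sum_univ_add]
  rw [Finset.sum_eq_zero (s := Finset.univ (α := Fin d)), add_zero]
  · rfl
  · intro k _
    rw [hT, zero_mul]
    rw [Fin.lt_def]
    simp
    omega

theorem ld_transpose {m r : ℕ} (h : r ≤ m) (X : Matrix (Fin m) (Fin m) ℝ) :
    ld h Xᵀ = (ld h X)ᵀ := rfl

theorem ld_conj {m r : ℕ} (h : r ≤ m) (T Y : Matrix (Fin m) (Fin m) ℝ)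
    (hT : ∀ i j, i < j → T i j = 0) :
    ld h (T * Y * Tᵀ) = ld h T * ld h Y * (ld h T)ᵀ := by
  have h1 : (T * Y * Tᵀ) = (T * (T * Y)ᵀ)ᵀ := by
    simp [Matrix.transpose_mul, Matrix.mul_assoc]
  rw [h1, ld_transpose, ld_mul_left h _ _ hT, ld_transpose, ld_mul_left h _ _ hT]
  simp [Matrix.transpose_mul]

theorem det_ld_conj {m r : ℕ} (h : r ≤ m) (T Y : Matrix (Fin m) (Fin m) ℝ)
    (hT : ∀ i j, i < j → T i j = 0) :
    (ld h (T * Y * Tᵀ)).det = (ld h T).det ^ 2 * (ld h Y).det := by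
  rw [ld_conj h T Y hT, Matrix.det_mul, Matrix.det_mul, Matrix.det_transpose]; ring

theorem exists_qr {m : ℕ} (M : Matrix (Fin m) (Fin m) ℝ) (hM : (M * Mᵀ).PosDef) :
    ∃ K : Matrix (Fin m) (Fin m) ℝ, (∀ i j, i < j → K i j = 0) ∧ K * M ∈ OG m := by
  classical
  have hd := LDL.diag_eq_lowerInv_conj hM
  set L := LDL.lowerInv hM with hL
  have hLdet : IsUnit L := by
    have : Invertible L := LDL.invertibleLowerInv hM
    exact isUnit_of_invertible L
  have hpd : (LDL.diag hM).PosDef := by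
    rw [hd]
    exact hM.mul_mul_conjTranspose_same (by
      exact Matrix.vecMul_injective_of_isUnit hLdet)
  have hpos : ∀ i, 0 < LDL.diagEntries hM i := by
    have := hpd
    rw [LDL.diag, Matrix.posDef_diagonal_iff] at this
    exact this
  refine ⟨Matrix.diagonal (fun i => (Real.sqrt (LDL.diagEntries hM i))⁻¹) * L, ?_, ?_⟩
  · intro i j hij
    rw [Matrix.diagonal_mul, hL, LDL.lowerInv_triangular hM hij, mul_zero]
  · rw [Matrix.mem_orthogonalGroup_iff]
    rw [Matrix.conjTranspose_eq_transpose_of_trivial] at hd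
    set S := Matrix.diagonal (fun i => (Real.sqrt (LDL.diagEntries hM i))⁻¹) with hS
    have : S * L * M * (S * L * M)ᵀ = S * (L * (M * Mᵀ) * Lᵀ) * Sᵀ := by
      simp only [Matrix.transpose_mul, Matrix.mul_assoc]
    rw [this, ← hd, LDL.diag, hS, Matrix.diagonal_transpose, Matrix.diagonal_mul_diagonal,
      Matrix.diagonal_mul_diagonal, ← Matrix.diagonal_one]
    congr 1
    ext i
    have h0 := hpos i
    have h1 := Real.sqrt_pos.mpr h0
    have h2 := Real.mul_self_sqrt h0.le
    field_simp
    nlinarith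

theorem det_two {r : ℕ} (M : Matrix (Fin (r + 2)) (Fin (r + 2)) ℝ) (a : ℝ)
    (h00 : M 0 0 = 0) (h01 : M 0 1 = a) (h10 : M 1 0 = -a)
    (h0 : ∀ i : Fin r, M 0 i.succ.succ = 0) (h0' : ∀ i : Fin r, M i.succ.succ 0 = 0) :
    M.det = a ^ 2 * (M.submatrix (fun i : Fin r => i.succ.succ) (fun i => i.succ.succ)).det := by
  have e1 : (Fin.succ 0 : Fin (r+2)) = 1 := rfl
  have key : (M.submatrix Fin.succ (Fin.succAbove 1)).det = 
      -a * (M.submatrix (fun i : Fin r => i.succ.succ) (fun i => i.succ.succ)).det := by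
    rw [Matrix.det_succ_column_zero, Fin.sum_univ_succ, Finset.sum_eq_zero]
    · have e2 : (Fin.succAbove (1 : Fin (r+2)) 0) = 0 := by simp
      have e3 : (M.submatrix Fin.succ (Fin.succAbove 1)).submatrix (Fin.succAbove 0) Fin.succ
        = M.submatrix (fun i : Fin r => i.succ.succ) (fun i => i.succ.succ) := by
        ext i j
        simp only [Matrix.submatrix_apply]
        congr 1
      rw [e3, Matrix.submatrix_apply, e2, e1, h10]
      simp
    · intro i _
      have : ((1 : Fin (r+2)).succAbove 0) = 0 := by simp
      rw [Matrix.submatrix_apply, this, h0']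
      ring
  rw [Matrix.det_succ_row_zero, Fin.sum_univ_succ, Fin.sum_univ_succ, Finset.sum_eq_zero]
  · rw [e1, key, h00, h01]
    simp
    ring
  · intro i _
    rw [h0]; ring


/-- embed `O(m)` into `O(m+1)` -/
def emb {m : ℕ} (M : Matrix (Fin m) (Fin m) ℝ) : Matrix (Fin (m + 1)) (Fin (m + 1)) ℝ :=
  Matrix.of fun i j => Fin.cases (Fin.cases 1 (fun _ => 0) j)
    (fun i' => Fin.cases 0 (fun j' => M i' j') j) i

/-- bordered antisymmetric matrix -/
def bd {m : ℕ} (v : Fin m → ℝ) (M : Matrix (Fin m) (Fin m) ℝ) :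
    Matrix (Fin (m + 1)) (Fin (m + 1)) ℝ :=
  Matrix.of fun i j => Fin.cases (Fin.cases 0 (fun j' => v j') j)
    (fun i' => Fin.cases (-v i') (fun j' => M i' j') j) i

/-- zero in the corner -/
def zb {m : ℕ} (M : Matrix (Fin m) (Fin m) ℝ) :
    Matrix (Fin (m + 1)) (Fin (m + 1)) ℝ :=
  Matrix.of fun i j => Fin.cases 0
    (fun i' => Fin.cases 0 (fun j' => M i' j') j) i

section
variable {m : ℕ} (M N : Matrix (Fin m) (Fin m) ℝ) (v : Fin m → ℝ) (i j : Fin m)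
@[simp] theorem emb00 : emb M 0 0 = 1 := rfl
@[simp] theorem emb0s : emb M 0 j.succ = 0 := rfl
@[simp] theorem embs0 : emb M i.succ 0 = 0 := rfl
@[simp] theorem embss : emb M i.succ j.succ = M i j := rfl
@[simp] theorem bd00 : bd v M 0 0 = 0 := rfl
@[simp] theorem bd0s : bd v M 0 j.succ = v j := rfl
@[simp] theorem bds0 : bd v M i.succ 0 = - v i := rfl
@[simp] theorem bdss : bd v M i.succ j.succ = M i j := rfl
@[simp] theorem zb0 (k : Fin (m+1)) : zb M 0 k = 0 := rfl
@[simp] theorem zbs0 : zb M i.succ 0 = 0 := rfl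
@[simp] theorem zbss : zb M i.succ j.succ = M i j := rfl

theorem emb_mul : emb (M * N) = emb M * emb N := by
  ext i j
  rw [Matrix.mul_apply, Fin.sum_univ_succ]
  refine Fin.cases ?_ (fun i => ?_) i <;> refine Fin.cases ?_ (fun j => ?_) j <;>
    simp [Matrix.mul_apply]

theorem emb_transpose : emb Mᵀ = (emb M)ᵀ := by
  ext i j
  refine Fin.cases ?_ (fun i => ?_) i <;> refine Fin.cases ?_ (fun j => ?_) j <;> simp

theorem emb_one : emb (1 : Matrix (Fin m) (Fin m) ℝ) = 1 := by
  ext i j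
  refine Fin.cases ?_ (fun i => ?_) i <;> refine Fin.cases ?_ (fun j => ?_) j <;>
    simp [Matrix.one_apply, Fin.succ_ne_zero, Ne.symm (Fin.succ_ne_zero _)]

theorem emb_bd : emb M * bd v N * (emb M)ᵀ = bd (M *ᵥ v) (M * N * Mᵀ) := by
  ext i j
  simp only [Matrix.mul_apply, Fin.sum_univ_succ]
  refine Fin.cases ?_ (fun i => ?_) i <;> refine Fin.cases ?_ (fun j => ?_) j <;>
    simp [Matrix.mul_apply, Matrix.mulVec, dotProduct, mul_comm]

theorem emb_zb : emb M * zb N * (emb M)ᵀ = zb (M * N * Mᵀ) := by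
  ext i j
  simp only [Matrix.mul_apply, Fin.sum_univ_succ]
  refine Fin.cases ?_ (fun i => ?_) i <;> refine Fin.cases ?_ (fun j => ?_) j <;>
    simp [Matrix.mul_apply]
end

theorem emb_mem {m : ℕ} {M : Matrix (Fin m) (Fin m) ℝ} (h : M ∈ OG m) : emb M ∈ OG (m + 1) := by
  rw [Matrix.mem_orthogonalGroup_iff] at *
  have h2 : M * Mᵀ = 1 := h
  show emb M * (emb M)ᵀ = 1
  rw [← emb_transpose, ← emb_mul, h2, emb_one]

/-- embedding on groups -/
def embG {m : ℕ} (g : OG m) : OG (m + 1) := ⟨emb g.1, emb_mem g.2⟩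

/-- partial sums of squares -/
def ps {m : ℕ} (r : ℕ) (x : Fin m → ℝ) : ℝ := ∑ i : Fin m, if i.val < r then x i ^ 2 else 0

theorem ps_castLE {m r : ℕ} (h : r ≤ m) (x : Fin m → ℝ) :
    ps r x = ∑ i : Fin r, x (Fin.castLE h i) ^ 2 := by
  obtain ⟨d, rfl⟩ := Nat.exists_eq_add_of_le h
  rw [ps, Fin.sum_univ_add]
  simp
  rfl

theorem step_alg {M : ℕ} (h : Matrix (Fin (M + 1)) (Fin (M + 1)) ℝ) (hh : h ∈ OG (M + 1))
    (h0 : h 0 0 ≠ 0) : ∃ k ∈ OG M, ∀ X : Matrix (Fin M) (Fin M) ℝ, ∀ (r : ℕ) (hr : r ≤ M)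
      (hr2 : r + 2 ≤ M + 1 + 1),
      (ld hr2 (bd (fun i => h i 0) (h * zb X * hᵀ))).det
        = ps (r + 1) (fun i => h i 0) * (ld hr (k * X * kᵀ)).det := by
  have hhT : h * hᵀ = 1 := (Matrix.mem_orthogonalGroup_iff _ _).mp hh
  set u : Fin M → ℝ := fun i => h i.succ 0 / h 0 0 with hu
  set Λ : Matrix (Fin (M + 1)) (Fin (M + 1)) ℝ :=
    Matrix.of fun i j => Fin.cases (Fin.cases 1 (fun _ => 0) j)
    (fun i' => Fin.cases (-u i') (fun j' => (1 : Matrix (Fin M) (Fin M) ℝ) i' j') j) i with hΛ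
  have L00 : Λ 0 0 = 1 := rfl
  have L0s : ∀ j : Fin M, Λ 0 j.succ = 0 := fun _ => rfl
  have Ls0 : ∀ i : Fin M, Λ i.succ 0 = - u i := fun _ => rfl
  have Lss : ∀ i j : Fin M, Λ i.succ j.succ = (1 : Matrix (Fin M) (Fin M) ℝ) i j := fun _ _ => rfl
  have Ltri : ∀ i j, i < j → emb Λ i j = 0 := by
    intro i j
    refine Fin.cases ?_ (fun i => ?_) i <;> refine Fin.cases ?_ (fun j => ?_) j
    · simp
    · simp
    · simp
    · refine Fin.cases ?_ (fun i => ?_) i <;> refine Fin.cases ?_ (fun j => ?_) j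
      · simp
      · intro _; exact L0s j
      · simp
      · intro hij
        have : i ≠ j := by
          rintro rfl; exact lt_irrefl _ hij
        simp [Lss, this]
  have Ldiag : ∀ i, emb Λ i i = 1 := by
    intro i
    refine Fin.cases ?_ (fun i => ?_) i
    · simp
    · refine Fin.cases ?_ (fun i => ?_) i
      · exact L00
      · simp [Lss]
  have Ldet : ∀ (r : ℕ) (hr : r ≤ M + 1 + 1), (ld hr (emb Λ)).det = 1 := by
    intro r hr
    rw [Matrix.det_of_isLowerTriangular]
    · apply Finset.prod_eq_one
      intro i _
      exact Ldiag _
    · intro i j hij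
      have hij' : i < j := by simpa using hij
      exact Ltri (Fin.castLE hr i) (Fin.castLE hr j) hij'
  have Ly : Λ *ᵥ (fun i => h i 0) = fun i => if i = 0 then h 0 0 else 0 := by
    ext i
    simp only [Matrix.mulVec, dotProduct, Fin.sum_univ_succ]
    refine Fin.cases ?_ (fun i => ?_) i
    · simp [L00, L0s]
    · simp only [Ls0, Lss, Matrix.one_apply, ite_mul, one_mul, zero_mul, Finset.sum_ite_eq,
        Finset.mem_univ, if_true, Fin.succ_ne_zero, if_false, hu]
      field_simp
      ring
  set B : Matrix (Fin M) (Fin M) ℝ := (Λ * h).submatrix Fin.succ Fin.succ with hB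
  have Bcol : ∀ i : Fin M, (Λ * h) i.succ 0 = 0 := by
    intro i
    have := congrFun Ly i.succ
    simpa [Matrix.mulVec, dotProduct, Matrix.mul_apply] using this
  have BB : B * Bᵀ = 1 + Matrix.replicateCol Unit u * Matrix.replicateRow Unit u := by
    have e : (Λ * h) * (Λ * h)ᵀ = Λ * Λᵀ := by
      rw [Matrix.transpose_mul, Matrix.mul_assoc, ← Matrix.mul_assoc h, hhT, Matrix.one_mul]
    ext i j
    have := congrFun (congrFun e i.succ) j.succ
    rw [Matrix.mul_apply, Matrix.mul_apply, Fin.sum_univ_succ, Fin.sum_univ_succ] at this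
    simp only [Matrix.transpose_apply, Bcol, Ls0, Lss, zero_mul, zero_add] at this
    rw [Matrix.mul_apply]
    simp only [hB, Matrix.submatrix_apply, Matrix.transpose_apply]
    rw [this]
    simp [Matrix.mul_apply, Matrix.one_apply, add_comm]
  have BX : ∀ X, (Λ * (h * zb X * hᵀ) * Λᵀ).submatrix Fin.succ Fin.succ = B * X * Bᵀ := by
    intro X
    have e : Λ * (h * zb X * hᵀ) * Λᵀ = (Λ * h) * zb X * (Λ * h)ᵀ := by
      simp only [Matrix.transpose_mul, Matrix.mul_assoc]
    rw [e]
    ext i j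
    simp [Matrix.mul_apply, Fin.sum_univ_succ, hB]
  have hdetB : ∀ (r : ℕ) (hr : r ≤ M), h 0 0 ^ 2 * (ld hr (B * Bᵀ)).det =
      ps (r + 1) (fun i => h i 0) := by
    intro r hr
    have e : ld hr (B * Bᵀ) = 1 + Matrix.replicateCol Unit (fun i => u (Fin.castLE hr i))
        * Matrix.replicateRow Unit (fun i => u (Fin.castLE hr i)) := by
      rw [BB]
      ext i j
      simp [ld, Matrix.mul_apply, Matrix.one_apply]
    rw [e, Matrix.det_one_add_replicateCol_mul_replicateRow, ps_castLE (Nat.succ_le_succ hr),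
      Fin.sum_univ_succ]
    simp only [dotProduct, hu, mul_add, Finset.mul_sum]
    congr 1
    · simp
    · apply Finset.sum_congr rfl
      intro i _
      have : Fin.castLE (Nat.succ_le_succ hr) i.succ = (Fin.castLE hr i).succ := rfl
      rw [this]
      field_simp
  have hpd : (B * Bᵀ).PosDef := by
    rw [BB]
    refine Matrix.PosDef.add_posSemidef Matrix.PosDef.one ?_
    have := Matrix.posSemidef_self_mul_conjTranspose (Matrix.replicateCol Unit u)
    simpa [Matrix.conjTranspose_eq_transpose_of_trivial] using this
  obtain ⟨K, hK, hKo⟩ := exists_qr B hpd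
  refine ⟨K * B, hKo, ?_⟩
  intro X r hr hr2
  have hKoT : (K * B) * (K * B)ᵀ = 1 := (Matrix.mem_orthogonalGroup_iff _ _).mp hKo
  have e1 : (ld hr (K * B * X * (K * B)ᵀ)).det = (ld hr K).det ^ 2 * (ld hr (B * X * Bᵀ)).det := by
    rw [← det_ld_conj hr _ _ hK]
    simp only [Matrix.transpose_mul, Matrix.mul_assoc]
  have e2 : (ld hr K).det ^ 2 * (ld hr (B * Bᵀ)).det = 1 := by
    rw [← det_ld_conj hr _ _ hK]
    have : K * (B * Bᵀ) * Kᵀ = 1 := by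
      rw [← hKoT]
      simp only [Matrix.transpose_mul, Matrix.mul_assoc]
    rw [this]
    have : ld hr (1 : Matrix (Fin M) (Fin M) ℝ) = 1 := by
      ext i j; simp [ld, Matrix.one_apply]
    rw [this, Matrix.det_one]
  have e3 : (ld hr2 (bd (fun i => h i 0) (h * zb X * hᵀ))).det =
      h 0 0 ^ 2 * (ld hr (B * X * Bᵀ)).det := by
    have := det_ld_conj hr2 (emb Λ) (bd (fun i => h i 0) (h * zb X * hᵀ)) Ltri
    rw [Ldet, one_pow, one_mul, emb_bd, Ly] at this
    rw [← this, det_two _ (h 0 0)]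
    · rw [← BX]; rfl
    · rfl
    · rfl
    · rfl
    · intro i; rfl
    · intro i
      show -(0 : ℝ) = 0
      simp
  rw [e3, e1, ← hdetB r hr]
  linear_combination (-(h 0 0 ^ 2 * (ld hr (B * X * Bᵀ)).det)) * e2


theorem exists_rot {m : ℕ} (v : Fin (m + 1) → ℝ) (hv : v ⬝ᵥ v = 1) :
    ∃ c ∈ OG (m + 1), c *ᵥ v = Pi.single 0 1 := by
  set e : Fin (m + 1) → ℝ := Pi.single 0 1 with he
  by_cases hu : v - e = 0
  · refine ⟨1, one_mem _, ?_⟩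
    rw [Matrix.one_mulVec]; exact sub_eq_zero.mp hu
  set u := v - e with hu'
  have hee : e ⬝ᵥ e = 1 := by simp [he]
  have huu : u ⬝ᵥ u ≠ 0 := fun h => hu (dotProduct_self_eq_zero.mp h)
  have huu2 : u ⬝ᵥ u = 2 - 2 * (v ⬝ᵥ e) := by
    simp only [hu', sub_dotProduct, dotProduct_sub, hv, hee, dotProduct_comm e v]; ring
  have huv : u ⬝ᵥ v = 1 - v ⬝ᵥ e := by
    simp only [hu', sub_dotProduct, hv, dotProduct_comm e v]
  set t := 2 / (u ⬝ᵥ u) with ht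
  refine ⟨1 - t • Matrix.vecMulVec u u, ?_, ?_⟩
  · rw [Matrix.mem_orthogonalGroup_iff]
    show (1 - t • Matrix.vecMulVec u u) * (1 - t • Matrix.vecMulVec u u)ᵀ = 1
    rw [Matrix.transpose_sub, Matrix.transpose_smul, Matrix.transpose_vecMulVec,
      Matrix.transpose_one]
    have : Matrix.vecMulVec u u * Matrix.vecMulVec u u = (u ⬝ᵥ u) • Matrix.vecMulVec u u := by
      ext i j
      simp only [Matrix.mul_apply, Matrix.vecMulVec_apply, dotProduct, Matrix.smul_apply,
        smul_eq_mul, Finset.sum_mul]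
      exact Finset.sum_congr rfl fun k _ => by ring
    simp only [Matrix.sub_mul, Matrix.mul_sub, Matrix.one_mul, Matrix.mul_one, Matrix.smul_mul,
      Matrix.mul_smul, this]
    have h3 : t * (t * (u ⬝ᵥ u)) = 2 * t := by rw [ht]; field_simp
    rw [smul_sub, smul_smul, smul_smul, mul_assoc, h3, two_mul, add_smul]
    abel
  · rw [Matrix.sub_mulVec, Matrix.one_mulVec, Matrix.smul_mulVec, Matrix.vecMulVec_mulVec]
    have : t * (u ⬝ᵥ v) = 1 := by
      rw [ht, huv, div_mul_eq_mul_div, div_eq_one_iff_eq huu, huu2]; ring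
    simp only [op_smul_eq_smul, smul_smul, this, one_smul]
    simp [hu']

theorem cstruct {M : ℕ} (X : Matrix (Fin (M + 1 + 1)) (Fin (M + 1 + 1)) ℝ) (hX : Xᵀ = -X)
    (hX1 : X * Xᵀ = 1) : ∃ c ∈ OG (M + 1), ∃ X' : Matrix (Fin M) (Fin M) ℝ, X'ᵀ = -X' ∧
      X' * X'ᵀ = 1 ∧ emb c * X * (emb c)ᵀ = bd (Pi.single 0 1) (zb X') := by
  have hanti : ∀ i j, X j i = - X i j := fun i j => congrFun (congrFun hX i) j
  have h00 : X 0 0 = 0 := by have := hanti 0 0; linarith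
  set v : Fin (M + 1) → ℝ := fun j => X 0 j.succ with hv
  have hXbd : X = bd v (X.submatrix Fin.succ Fin.succ) := by
    ext i j
    refine Fin.cases ?_ (fun i => ?_) i <;> refine Fin.cases ?_ (fun j => ?_) j <;>
      simp [h00, hv]
    exact hanti _ _
  have hvv : v ⬝ᵥ v = 1 := by
    have := congrFun (congrFun hX1 0) 0
    simpa [Matrix.mul_apply, Fin.sum_univ_succ (n := M + 1), h00, dotProduct, hv] using this
  obtain ⟨c, hc, hcv⟩ := exists_rot v hvv
  have hcc : (emb c)ᵀ * emb c = 1 := (Matrix.mem_orthogonalGroup_iff' _ _).mp (emb_mem hc)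
  have hcc' : emb c * (emb c)ᵀ = 1 := (Matrix.mem_orthogonalGroup_iff _ _).mp (emb_mem hc)
  set Y := emb c * X * (emb c)ᵀ with hY
  have hYt : Yᵀ = -Y := by
    simp only [hY, Matrix.transpose_mul, Matrix.transpose_transpose, hX, Matrix.mul_assoc]
    simp
  have hYY : Y * Y = -1 := by
    have h1 : X * X = -1 := by
      rw [hX, Matrix.mul_neg] at hX1
      rw [← hX1, neg_neg]
    calc Y * Y = emb c * X * ((emb c)ᵀ * emb c) * X * (emb c)ᵀ := by
          simp only [hY, Matrix.mul_assoc]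
      _ = -1 := by
          rw [hcc, Matrix.mul_one, Matrix.mul_assoc (emb c), h1]; simp [hcc']
  have hYanti : ∀ i j, Y j i = - Y i j := fun i j => congrFun (congrFun hYt i) j
  have hYbd : Y = bd (Pi.single 0 1) (c * X.submatrix Fin.succ Fin.succ * cᵀ) := by
    rw [hY]
    conv_lhs => rw [hXbd]
    rw [emb_bd, hcv]
  set C := c * X.submatrix Fin.succ Fin.succ * cᵀ with hC
  have hC0 : ∀ j, C 0 j = 0 := by
    intro j
    have := congrFun (congrFun hYY 0) j.succ
    rw [hYbd, Matrix.mul_apply, Fin.sum_univ_succ, Fin.sum_univ_succ] at this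
    simp only [bd00, bd0s, bdss] at this
    simpa [Fin.succ_ne_zero, Pi.single_apply, Matrix.one_apply, Ne.symm (Fin.succ_ne_zero _)] using this
  have hCa : ∀ i j, C j i = - C i j := by
    intro i j
    have := hYanti i.succ j.succ
    rwa [hYbd] at this
  set X' := C.submatrix Fin.succ Fin.succ with hX'
  have hCz : C = zb X' := by
    ext i j
    refine Fin.cases ?_ (fun i => ?_) i
    · simp [hC0]
    · refine Fin.cases ?_ (fun j => ?_) j
      · rw [hCa 0, hC0]; simp
      · rfl
  have hXa : X'ᵀ = -X' := by
    ext i j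
    exact hCa _ _
  refine ⟨c, hc, X', hXa, ?_, by rw [← hY, hYbd, hCz]⟩
  rw [hXa]
  ext i j
  have := congrFun (congrFun hYY i.succ.succ) j.succ.succ
  rw [hYbd, hCz, Matrix.mul_apply, Fin.sum_univ_succ, Fin.sum_univ_succ] at this
  simp only [bd0s, bds0, bdss, zb0, zbs0, zbss] at this
  simp [Fin.succ_ne_zero, Matrix.one_apply] at this
  simp [Matrix.mul_apply, Matrix.one_apply, this]


theorem cpw_mul (a b : ℝ) (w : ℂ) : cpw (a * b) w = cpw a w * cpw b w := by
  unfold cpw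
  by_cases ha : a = 0
  · simp [ha]
  by_cases hb : b = 0
  · simp [hb]
  simp only [ha, hb, mul_eq_zero, or_self, if_false]
  rw [Real.log_mul ha hb, ← Complex.exp_add]
  push_cast
  ring_nf

theorem cpw_one (w : ℂ) : cpw 1 w = 1 := by simp [cpw]

theorem cpw_zero (w : ℂ) : cpw 0 w = 0 := by simp [cpw]

theorem cpw_add (t : ℝ) (w v : ℂ) : cpw t (w + v) = cpw t w * cpw t v := by
  unfold cpw
  by_cases ha : t = 0
  · simp [ha]
  simp only [ha, if_false]
  rw [← Complex.exp_add, add_mul]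

theorem measurable_cpw (w : ℂ) : Measurable fun t : ℝ => cpw t w := by
  unfold cpw
  refine Measurable.ite (measurableSet_singleton _) measurable_const ?_
  have h1 : Measurable fun t : ℝ => (Real.log t : ℂ) :=
    Complex.measurable_ofReal.comp Real.measurable_log
  exact Complex.measurable_exp.comp (h1.const_mul w)

theorem norm_cpw_le (w : ℂ) (hw : 0 ≤ w.re) (t C : ℝ) (h : |t| ≤ C) :
    ‖cpw t w‖ ≤ Real.exp (w.re * Real.log C) := by
  unfold cpw
  split_ifs with h0
  · simp [Real.exp_nonneg]
  · rw [Complex.norm_exp]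
    apply Real.exp_le_exp.mpr
    have : (w * (Real.log t : ℂ)).re = w.re * Real.log t := by simp
    rw [this, ← Real.log_abs t]
    exact mul_le_mul_of_nonneg_left (Real.log_le_log (abs_pos.mpr h0) h) hw

/-- the integrand -/
def FF (n : ℕ) {m : ℕ} (h : 2 * n ≤ m) (w : ℕ → ℂ) (X : Matrix (Fin m) (Fin m) ℝ) : ℂ :=
  ∏ j : Fin n, cpw (ld (show 2 * (j.val + 1) ≤ m by have := j.isLt; omega) X).det (w j)

/-- radial product -/
def Ph {m : ℕ} (N : ℕ) (w : ℕ → ℂ) (x : Fin m → ℝ) : ℂ :=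
  ∏ j ∈ Finset.range N, cpw (ps (2 * j + 1) x) (w j)

theorem measurable_FF (n : ℕ) {m : ℕ} (h : 2 * n ≤ m) (w : ℕ → ℂ) : Measurable (FF n h w) := by
  unfold FF
  refine Finset.measurable_prod _ fun j _ => ?_
  refine (measurable_cpw _).comp ?_
  apply Continuous.measurable
  unfold ld
  fun_prop

theorem bdd_FF (n : ℕ) {m : ℕ} (h : 2 * n ≤ m) (w : ℕ → ℂ) (hw : ∀ j, 0 ≤ (w j).re) :
    ∃ C, ∀ X ∈ OG m, ‖FF n h w X‖ ≤ C := by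
  refine ⟨∏ j : Fin n, Real.exp ((w j).re * Real.log ((2 * (j.val + 1)).factorial)), ?_⟩
  intro X hX
  unfold FF
  rw [norm_prod]
  apply Finset.prod_le_prod
  · intros; exact norm_nonneg _
  · intro j _
    apply norm_cpw_le _ (hw _)
    have := Matrix.det_le (A := ld (show 2 * (j.val + 1) ≤ m by have := j.isLt; omega) X)
      (abv := AbsoluteValue.abs) (x := 1) (by
        intro i k
        have := entry_norm_bound_of_unitary hX (Fin.castLE (by have := j.isLt; omega) i) (Fin.castLE (by have := j.isLt; omega) k)
        simpa [Real.norm_eq_abs, ld] using this)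
    simpa using this

theorem meas_coe (m : ℕ) : Measurable (fun g : OG m => (g : Matrix (Fin m) (Fin m) ℝ)) :=
  measurable_subtype_coe

theorem cont_emb (m : ℕ) : Continuous (emb : Matrix (Fin m) (Fin m) ℝ → _) := by
  refine continuous_matrix fun i j => ?_
  refine Fin.cases ?_ (fun i => ?_) i <;> refine Fin.cases ?_ (fun j => ?_) j <;> simp <;> fun_prop

theorem cont_embG (m : ℕ) : Continuous (embG : OG m → _) :=
  ((cont_emb m).comp continuous_subtype_val).subtype_mk _

theorem embG_mul {m : ℕ} (g h : OG m) : embG (g * h) = embG g * embG h :=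
  Subtype.ext (emb_mul _ _)

theorem avg_left {m k : ℕ} (e : OG k → OG m) (he : Measurable e) (f : OG m → ℂ)
    (hf : Measurable f) (C : ℝ) (hC : ∀ g, ‖f g‖ ≤ C) :
    ∫ g, f g ∂(hO m) = ∫ g, ∫ t, f (e t * g) ∂(hO k) ∂(hO m) := by
  rw [integral_integral_swap]
  · have : ∀ t, ∫ g, f (e t * g) ∂(hO m) = ∫ g, f g ∂(hO m) :=
      fun t => integral_mul_left_eq_self f (e t)
    simp [this]
  · refine Integrable.of_bound (C := C) ?_ (Filter.Eventually.of_forall fun p => hC _)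
    apply Measurable.aestronglyMeasurable
    exact hf.comp ((he.comp measurable_snd).mul measurable_fst)

theorem avg_right {m k : ℕ} (e : OG k → OG m) (he : Measurable e) (f : OG m → ℂ)
    (hf : Measurable f) (C : ℝ) (hC : ∀ g, ‖f g‖ ≤ C) :
    ∫ g, f g ∂(hO m) = ∫ g, ∫ t, f (g * e t) ∂(hO k) ∂(hO m) := by
  rw [integral_integral_swap]
  · have : ∀ t, ∫ g, f (g * e t) ∂(hO m) = ∫ g, f g ∂(hO m) :=
      fun t => integral_mul_right_eq_self f (e t)
    simp [this]
  · refine Integrable.of_bound (C := C) ?_ (Filter.Eventually.of_forall fun p => hC _)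
    apply Measurable.aestronglyMeasurable
    exact hf.comp (measurable_fst.mul (he.comp measurable_snd))

/-- conjugation -/
def cj {m : ℕ} (g : OG m) (X : Matrix (Fin m) (Fin m) ℝ) : Matrix (Fin m) (Fin m) ℝ :=
  g.1 * X * g.1ᵀ

theorem cj_mul {m : ℕ} (g h : OG m) (X : Matrix (Fin m) (Fin m) ℝ) :
    cj (g * h) X = cj g (cj h X) := by
  simp [cj, Matrix.mul_assoc, Matrix.transpose_mul]

theorem cj_anti {m : ℕ} (g : OG m) (X : Matrix (Fin m) (Fin m) ℝ) (h : Xᵀ = -X) :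
    (cj g X)ᵀ = - cj g X := by
  simp [cj, Matrix.mul_assoc, Matrix.transpose_mul, h]

theorem cj_orth {m : ℕ} (g : OG m) (X : Matrix (Fin m) (Fin m) ℝ) (h : X * Xᵀ = 1) :
    (cj g X) * (cj g X)ᵀ = 1 := by
  have h1 : g.1ᵀ * g.1 = 1 := (Matrix.mem_orthogonalGroup_iff' _ _).mp g.2
  have h2 : g.1 * g.1ᵀ = 1 := (Matrix.mem_orthogonalGroup_iff _ _).mp g.2
  calc _ = g.1 * X * (g.1ᵀ * g.1) * Xᵀ * g.1ᵀ := by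
        simp only [cj, Matrix.transpose_mul, Matrix.transpose_transpose, Matrix.mul_assoc]
    _ = 1 := by rw [h1, Matrix.mul_one, Matrix.mul_assoc g.1, h, Matrix.mul_one, h2]

theorem cj_meas {m : ℕ} (X : Matrix (Fin m) (Fin m) ℝ) : Measurable fun g : OG m => cj g X := by
  apply Continuous.measurable
  unfold cj
  fun_prop

theorem ps_one {m : ℕ} (x : Fin (m + 1) → ℝ) : ps (2 * 0 + 1) x = x 0 ^ 2 := by
  rw [ps_castLE (Nat.succ_le_succ (Nat.zero_le m))]
  exact Fin.sum_univ_one _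

theorem FF_split {n : ℕ} (w : ℕ → ℂ) (h : OG (2 * n + 1)) :
    ∃ k : OG (2 * n), ∀ X : Matrix (Fin (2 * n)) (Fin (2 * n)) ℝ,
      FF (n + 1) (m := 2 * n + 1 + 1) (le_refl _) w (bd (fun i => h.1 i 0) (cj h (zb X)))
        = Ph (n + 1) w (fun i => h.1 i 0) * FF n (le_refl _) (fun j => w (j + 1)) (cj k X) := by
  by_cases h0 : h.1 0 0 = 0
  · refine ⟨1, fun X => ?_⟩
    have e1 : Ph (n + 1) w (fun i => h.1 i 0) = 0 := by
      unfold Ph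
      apply Finset.prod_eq_zero (i := 0) (by simp)
      rw [ps_one, h0]
      simp [cpw]
    rw [e1, zero_mul]
    unfold FF
    apply Finset.prod_eq_zero (i := 0) (by simp)
    have : (ld (show 2 * ((0 : Fin (n+1)).val + 1) ≤ 2 * n + 1 + 1 by simp)
      (bd (fun i => h.1 i 0) (cj h (zb X)))).det = 0 := by
      apply Matrix.det_eq_zero_of_row_eq_zero (⟨0, by simp⟩)
      intro j
      have hj : j = ⟨0, by simp⟩ ∨ j = ⟨1, by simp⟩ := by
        rcases j with ⟨j, hj⟩
        simp at hj
        simp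
        omega
      rcases hj with rfl | rfl
      · rfl
      · exact h0
    rw [this, cpw_zero]
  · obtain ⟨k, hk, hkX⟩ := step_alg h.1 h.2 h0
    refine ⟨⟨k, hk⟩, fun X => ?_⟩
    unfold FF Ph
    rw [← Fin.prod_univ_eq_prod_range (fun j => cpw (ps (2 * j + 1) (fun i => h.1 i 0)) (w j))]
    have e2 : ∏ j : Fin n, cpw (ld (show 2 * (j.val + 1) ≤ 2 * n by have := j.isLt; omega)
        (cj ⟨k, hk⟩ X)).det (w (j + 1))
      = ∏ j : Fin (n + 1), cpw (ld (show 2 * j.val ≤ 2 * n by have := j.isLt; omega)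
        (cj ⟨k, hk⟩ X)).det (w j) := by
      rw [Fin.prod_univ_succ]
      have : (ld (show 2 * (0 : Fin (n+1)).val ≤ 2 * n by simp) (cj ⟨k, hk⟩ X)).det = 1 :=
        Matrix.det_fin_zero
      rw [this, cpw_one, one_mul]
      rfl
    rw [e2, ← Finset.prod_mul_distrib]
    apply Finset.prod_congr rfl
    intro j _
    rw [← cpw_mul]
    congr 1
    exact hkX X (2 * j) (by have := j.isLt; omega) (by have := j.isLt; omega)

/-- spherical average -/
def A0 (n : ℕ) (w : ℕ → ℂ) : ℂ := ∫ h, Ph (n + 1) w (fun i => h.1 i 0) ∂(hO (2 * n + 1))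

/-- the value -/
def VV : ℕ → (ℕ → ℂ) → ℂ
  | 0, _ => 1
  | n + 1, w => A0 n w * VV n (fun j => w (j + 1))

theorem main_step (n : ℕ) (w : ℕ → ℂ) (hw : ∀ j, 0 ≤ (w j).re)
    (ih : ∀ X : Matrix (Fin (2 * n)) (Fin (2 * n)) ℝ, Xᵀ = -X → X * Xᵀ = 1 →
      ∫ g, FF n (le_refl _) (fun j => w (j + 1)) (cj g X) ∂(hO (2 * n)) =
        VV n (fun j => w (j + 1)))
    (X : Matrix (Fin (2 * n + 1 + 1)) (Fin (2 * n + 1 + 1)) ℝ) (hX : Xᵀ = -X) (hX1 : X * Xᵀ = 1) :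
    ∫ g, FF (n + 1) (m := 2 * n + 1 + 1) (le_refl _) w (cj (embG g) X) ∂(hO (2 * n + 1)) =
      VV (n + 1) w := by
  obtain ⟨c, hc, X', hXa, hX1', hcX⟩ := cstruct X hX hX1
  obtain ⟨C, hC⟩ := bdd_FF (n + 1) (m := 2 * n + 1 + 1) (le_refl _) w hw
  have hFm := measurable_FF (n + 1) (m := 2 * n + 1 + 1) (le_refl _) w
  rw [← integral_mul_right_eq_self _ (⟨c, hc⟩ : OG (2 * n + 1))]
  have hcX' : cj (embG ⟨c, hc⟩) X = bd (Pi.single 0 1) (zb X') := hcX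
  simp only [embG_mul, cj_mul, hcX']
  have hZ1 : bd (Pi.single 0 1) (zb X') * (bd (Pi.single 0 1) (zb X'))ᵀ = 1 := by
    rw [← hcX']; exact cj_orth _ _ hX1
  rw [avg_right (m := 2 * n + 1) embG (cont_embG _).measurable
    (fun g : OG (2 * n + 1) => FF (n + 1) (m := 2 * n + 1 + 1) (le_refl _) w
      (cj (embG g) (bd (Pi.single 0 1) (zb X'))))
    (hFm.comp ((cj_meas _).comp (cont_embG _).measurable)) C
    (fun g => hC _ ((Matrix.mem_orthogonalGroup_iff _ _).mpr (cj_orth _ _ hZ1)))]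
  rw [VV, A0, ← integral_mul_const]
  congr 1
  ext h
  obtain ⟨k, hk⟩ := FF_split w h
  have e : ∀ t : OG (2 * n), cj (embG (h * embG t)) (bd (Pi.single 0 1) (zb X'))
      = bd (fun i => h.1 i 0) (cj h (zb (cj t X'))) := by
    intro t
    unfold cj embG
    rw [emb_bd]
    congr 1
    · ext i
      simp [Matrix.mul_apply, Fin.sum_univ_succ]
    · show h.1 * emb t.1 * zb X' * (h.1 * emb t.1)ᵀ = _
      rw [← emb_zb, Matrix.transpose_mul]
      simp only [Matrix.mul_assoc]
  simp only [e, hk, ← cj_mul]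
  rw [integral_const_mul]
  congr 1
  rw [integral_mul_left_eq_self (fun g => FF n (le_refl _) (fun j => w (j + 1)) (cj g X')) k]
  exact ih X' hXa hX1'

theorem main_rec (n : ℕ) : ∀ (w : ℕ → ℂ) (_ : ∀ j, 0 ≤ (w j).re)
    (X : Matrix (Fin (2 * n)) (Fin (2 * n)) ℝ), Xᵀ = -X → X * Xᵀ = 1 →
      ∫ g, FF n (le_refl _) w (cj g X) ∂(hO (2 * n)) = VV n w := by
  induction n with
  | zero =>
    intro w hw X _ _
    simp [FF, VV]
  | succ n ih =>
    intro w hw X hX hX1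
    obtain ⟨C, hC⟩ := bdd_FF (n + 1) (m := 2 * n + 1 + 1) (le_refl _) w hw
    have hFm := measurable_FF (n + 1) (m := 2 * n + 1 + 1) (le_refl _) w
    show ∫ g : OG (2 * n + 1 + 1), FF (n + 1) (m := 2 * n + 1 + 1) (le_refl _) w (cj g X)
      ∂(hO (2 * n + 1 + 1)) = _
    rw [avg_left (m := 2 * n + 1 + 1) embG (cont_embG _).measurable
      (fun g : OG (2 * n + 1 + 1) => FF (n + 1) (m := 2 * n + 1 + 1) (le_refl _) w (cj g X))
      (hFm.comp (cj_meas _)) C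
      (fun g => hC _ ((Matrix.mem_orthogonalGroup_iff _ _).mpr (cj_orth _ _ hX1)))]
    have : ∀ g : OG (2 * n + 1 + 1), ∫ t, FF (n + 1) (m := 2 * n + 1 + 1) (le_refl _) w
        (cj (embG t * g) X) ∂(hO (2 * n + 1)) = VV (n + 1) w := by
      intro g
      simp only [cj_mul]
      exact main_step n w hw (ih _ (fun j => hw _)) _ (cj_anti _ _ hX) (cj_orth _ _ hX1)
    simp only [this]
    simp


/-- Gaussian radial moment -/
def MM (m : ℕ) (W : ℂ) : ℂ :=
  ∫ x : Fin m → ℝ, cpw (∑ i, x i ^ 2) W * (Real.exp (-∑ i, x i ^ 2) : ℂ)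

theorem radial_int (m : ℕ) (hm : 1 ≤ m) (W : ℂ) (hW : 0 ≤ W.re) :
    ∫ y in Set.Ioi (0 : ℝ), y ^ (m - 1) • (cpw (y ^ 2) W * (Real.exp (-(y ^ 2)) : ℂ))
      = Complex.Gamma (m / 2 + W) / 2 := by
  have hm0 : (0 : ℝ) < m := by exact_mod_cast hm
  have hre : 0 < ((m : ℂ) / 2 + W).re := by
    have : ((m : ℂ) / 2).re = m / 2 := by
      rw [show ((m : ℂ) / 2) = ((m / 2 : ℝ) : ℂ) by push_cast; rfl, Complex.ofReal_re]
    rw [Complex.add_re, this]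
    positivity
  rw [Complex.Gamma_eq_integral hre, Complex.GammaIntegral]
  rw [← integral_comp_rpow_Ioi_of_pos (g := fun x : ℝ => ((Real.exp (-x) : ℝ) : ℂ) *
    (x : ℂ) ^ ((m : ℂ) / 2 + W - 1)) (p := 2) (by norm_num), ← integral_div]
  refine setIntegral_congr_fun measurableSet_Ioi fun y hy => ?_
  have hy : 0 < y := hy
  have hy2 : y ^ (2 : ℝ) = y ^ 2 := by norm_cast
  have hy1 : y ^ ((2 : ℝ) - 1) = y := by norm_num
  have h2 : (y ^ 2) ≠ 0 := by positivity
  simp only [hy2, hy1, Complex.real_smul]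
  rw [Complex.cpow_def_of_ne_zero (by exact_mod_cast h2), ← Complex.ofReal_log (by positivity)]
  unfold cpw
  rw [if_neg h2]
  have hyE : ((y : ℝ) : ℂ) = Complex.exp (Real.log y) := by
    rw [← Complex.ofReal_exp, Real.exp_log hy]
  have hl : Real.log (y ^ 2) = 2 * Real.log y := by simp
  have key : (y : ℂ) ^ (m - 1) * Complex.exp (W * Real.log (y ^ 2))
      = y * Complex.exp (Real.log (y ^ 2) * (m / 2 + W - 1)) := by
    rw [hl]
    conv_lhs => rw [hyE]
    conv_rhs => rw [hyE]
    rw [← Complex.exp_nat_mul, ← Complex.exp_add, ← Complex.exp_add]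
    congr 1
    push_cast [Nat.cast_sub hm]
    ring
  push_cast at key ⊢
  linear_combination (Complex.exp (-(y:ℂ)^2)) * key

theorem MM_eq (m : ℕ) (hm : 1 ≤ m) (W : ℂ) (hW : 0 ≤ W.re) :
    MM m W = (m / 2) * (((√Real.pi ^ m / Real.Gamma (m / 2 + 1) : ℝ) : ℂ)) *
      Complex.Gamma (m / 2 + W) := by
  have : Nonempty (Fin m) := ⟨⟨0, hm⟩⟩
  have : Nontrivial (EuclideanSpace ℝ (Fin m)) := inferInstance
  have h := integral_fun_norm_addHaar (E := EuclideanSpace ℝ (Fin m)) volume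
    (fun r : ℝ => cpw (r ^ 2) W * (Real.exp (-(r ^ 2)) : ℂ))
  rw [finrank_euclideanSpace, Fintype.card_fin, radial_int m hm W hW] at h
  rw [← (PiLp.volume_preserving_toLp (Fin m)).integral_comp
    (MeasurableEquiv.toLp 2 _).measurableEmbedding] at h
  simp only [EuclideanSpace.norm_sq_eq, Real.norm_eq_abs, sq_abs] at h
  have hG : 0 < Real.Gamma ((m : ℝ) / 2 + 1) := Real.Gamma_pos_of_pos (by positivity)
  have hv : volume.real (Metric.ball (0 : EuclideanSpace ℝ (Fin m)) 1)
      = √Real.pi ^ m / Real.Gamma (m / 2 + 1) := by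
    rw [Measure.real, EuclideanSpace.volume_ball]
    simp only [ENNReal.ofReal_one, one_pow, one_mul, Fintype.card_fin]
    rw [ENNReal.toReal_ofReal (by positivity)]
  rw [hv] at h
  unfold MM
  rw [h, nsmul_eq_mul, Complex.real_smul]
  ring

theorem MM_ne (m : ℕ) (hm : 1 ≤ m) (W : ℂ) (hW : 0 ≤ W.re) : MM m W ≠ 0 := by
  have hm0 : (0 : ℝ) < m := by exact_mod_cast hm
  rw [MM_eq m hm W hW]
  have hG : 0 < Real.Gamma ((m : ℝ) / 2 + 1) := Real.Gamma_pos_of_pos (by positivity)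
  have h1 : (√Real.pi ^ m / Real.Gamma (m / 2 + 1)) ≠ 0 := by
    have := Real.pi_pos
    positivity
  have h2 : Complex.Gamma (m / 2 + W) ≠ 0 := by
    apply Complex.Gamma_ne_zero_of_re_pos
    have : ((m : ℂ) / 2).re = m / 2 := by
      rw [show ((m : ℂ) / 2) = ((m / 2 : ℝ) : ℂ) by push_cast; rfl, Complex.ofReal_re]
    rw [Complex.add_re, this]
    positivity
  have h3 : (m : ℂ) / 2 ≠ 0 := by
    have : (m : ℂ) ≠ 0 := by exact_mod_cast hm0.ne'
    simpa using this
  exact mul_ne_zero (mul_ne_zero h3 (by exact_mod_cast h1)) h2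

theorem MM_rec (m : ℕ) (hm : 1 ≤ m) (W : ℂ) (hW : 0 ≤ W.re) :
    (m / 2) * MM (m + 2) W = Real.pi * (m / 2 + W) * MM m W := by
  have hm0 : (0 : ℝ) < m := by exact_mod_cast hm
  have hmc : (m : ℂ) ≠ 0 := by exact_mod_cast hm0.ne'
  rw [MM_eq m hm W hW, MM_eq (m + 2) (by omega) W hW]
  have hG : 0 < Real.Gamma ((m : ℝ) / 2 + 1) := Real.Gamma_pos_of_pos (by positivity)
  have e1 : Real.Gamma (((m + 2 : ℕ) : ℝ) / 2 + 1) = (m / 2 + 1) * Real.Gamma (m / 2 + 1) := by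
    rw [← Real.Gamma_add_one (by positivity)]
    congr 1
    push_cast
    ring
  have hne : (m : ℂ) / 2 + W ≠ 0 := by
    intro h
    have h' := congrArg Complex.re h
    have : ((m : ℂ) / 2).re = m / 2 := by
      rw [show ((m : ℂ) / 2) = ((m / 2 : ℝ) : ℂ) by push_cast; rfl, Complex.ofReal_re]
    rw [Complex.add_re, this, Complex.zero_re] at h'
    have : (0 : ℝ) < m / 2 := by positivity
    linarith
  have e2 : Complex.Gamma (((m + 2 : ℕ) : ℂ) / 2 + W) = (m / 2 + W) * Complex.Gamma (m / 2 + W) := by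
    rw [← Complex.Gamma_add_one _ hne]
    congr 1
    push_cast
    ring
  have e3 : √Real.pi ^ (m + 2) = √Real.pi ^ m * Real.pi := by
    rw [pow_add, Real.sq_sqrt Real.pi_pos.le]
  rw [e1, e2, e3]
  have hGc : ((Real.Gamma ((m : ℝ) / 2 + 1) : ℝ) : ℂ) ≠ 0 := by exact_mod_cast hG.ne'
  have hm2 : (m : ℂ) + 2 ≠ 0 := by exact_mod_cast (show (m : ℝ) + 2 ≠ 0 by positivity)
  have hm3 : (m : ℂ) / 2 + 1 ≠ 0 := by
    intro h
    apply hm2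
    linear_combination 2 * h
  push_cast
  generalize Complex.Gamma ((m : ℂ) / 2 + W) = Z
  generalize ((Real.Gamma ((m : ℝ) / 2 + 1) : ℝ) : ℂ) = G at *
  field_simp


theorem ps_smul {m : ℕ} (r : ℕ) (t : ℝ) (x : Fin m → ℝ) : ps r (t • x) = t ^ 2 * ps r x := by
  unfold ps
  rw [Finset.mul_sum]
  refine Finset.sum_congr rfl fun i _ => ?_
  split_ifs <;> simp [mul_pow]

theorem cpw_zero_exp (t : ℝ) (ht : t ≠ 0) : cpw t 0 = 1 := by simp [cpw, ht]

theorem cpw_sum (N : ℕ) (w : ℕ → ℂ) (t : ℝ) (ht : t ≠ 0) :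
    cpw t (∑ j ∈ Finset.range N, w j) = ∏ j ∈ Finset.range N, cpw t (w j) := by
  induction N with
  | zero => simp [cpw_zero_exp t ht]
  | succ N ih => rw [Finset.sum_range_succ, cpw_add, ih, Finset.prod_range_succ]

theorem Ph_smul {m : ℕ} (N : ℕ) (w : ℕ → ℂ) (t : ℝ) (ht : t ≠ 0) (x : Fin m → ℝ) :
    Ph N w (t • x) = cpw (t ^ 2) (∑ j ∈ Finset.range N, w j) * Ph N w x := by
  rw [cpw_sum N w _ (by positivity)]
  unfold Ph
  rw [← Finset.prod_mul_distrib]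
  refine Finset.prod_congr rfl fun j _ => ?_
  rw [ps_smul, cpw_mul]

/-- general spherical average -/
def AA (m N : ℕ) (w : ℕ → ℂ) : ℂ := ∫ h, Ph N w (fun i => h.1 i 0) ∂(hO (m + 1))

theorem ps_nonneg {m : ℕ} (r : ℕ) (x : Fin m → ℝ) : 0 ≤ ps r x := by
  unfold ps
  refine Finset.sum_nonneg fun i _ => ?_
  split_ifs <;> positivity

theorem ps_le {m : ℕ} (r : ℕ) (x : Fin m → ℝ) : ps r x ≤ ∑ i, x i ^ 2 := by
  unfold ps
  refine Finset.sum_le_sum fun i _ => ?_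
  split_ifs <;> nlinarith [sq_nonneg (x i)]

theorem ps_full {m : ℕ} (r : ℕ) (h : m ≤ r) (x : Fin m → ℝ) : ps r x = ∑ i, x i ^ 2 := by
  unfold ps
  refine Finset.sum_congr rfl fun i _ => ?_
  rw [if_pos (by have := i.isLt; omega)]

theorem meas_Ph {m : ℕ} (N : ℕ) (w : ℕ → ℂ) : Measurable (Ph N w : (Fin m → ℝ) → ℂ) := by
  unfold Ph
  refine Finset.measurable_prod _ fun j _ => ?_
  refine (measurable_cpw _).comp ?_
  unfold ps
  refine Finset.measurable_sum _ fun i _ => ?_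
  split_ifs
  · fun_prop
  · fun_prop

theorem norm_Ph_le {m : ℕ} (N : ℕ) (w : ℕ → ℂ) (hw : ∀ j, 0 ≤ (w j).re) (x : Fin m → ℝ) :
    ‖Ph N w x‖ ≤ Real.exp ((∑ j ∈ Finset.range N, (w j).re) * Real.log (∑ i, x i ^ 2)) := by
  unfold Ph
  rw [norm_prod, Finset.sum_mul, Real.exp_sum]
  refine Finset.prod_le_prod (fun _ _ => norm_nonneg _) fun j _ => ?_
  refine norm_cpw_le _ (hw j) _ _ ?_
  rw [abs_of_nonneg (ps_nonneg _ _)]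
  exact ps_le _ _

theorem log_bound (a t : ℝ) (ha : 0 ≤ a) (ht : 0 ≤ t) :
    a * Real.log t ≤ a * Real.log (2 * a + 1) + t / 2 := by
  have hb : 0 < 2 * a + 1 := by positivity
  have h0 : 0 ≤ Real.log (2 * a + 1) := Real.log_nonneg (by linarith)
  rcases ht.eq_or_lt with rfl | ht
  · simp; positivity
  · have h := Real.log_le_sub_one_of_pos (show 0 < t / (2 * a + 1) by positivity)
    rw [Real.log_div ht.ne' hb.ne'] at h
    have h1 : a * (t / (2 * a + 1)) ≤ t / 2 := by
      rw [← mul_div_assoc, div_le_div_iff₀ hb (by norm_num)]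
      nlinarith
    nlinarith

theorem nn_orth {m : ℕ} (h : OG m) (x : Fin m → ℝ) :
    ∑ i, (h.1 *ᵥ x) i ^ 2 = ∑ i, x i ^ 2 := by
  have h1 : h.1ᵀ * h.1 = 1 := (Matrix.mem_orthogonalGroup_iff' _ _).mp h.2
  have e : ∀ y : Fin m → ℝ, ∑ i, y i ^ 2 = y ⬝ᵥ y := fun y => by simp [dotProduct, sq]
  rw [e, e, Matrix.dotProduct_mulVec, Matrix.vecMul_mulVec, h1, Matrix.vecMul_one]

theorem vol_orth {m : ℕ} (h : OG m) (f : (Fin m → ℝ) → ℂ) :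
    ∫ x, f (h.1 *ᵥ x) = ∫ x, f x := by
  have h1 : h.1ᵀ * h.1 = 1 := (Matrix.mem_orthogonalGroup_iff' _ _).mp h.2
  have hd : h.1.det * h.1.det = 1 := by
    have := congrArg Matrix.det h1
    simpa using this
  have hd0 : h.1.det ≠ 0 := by intro h0; simp [h0] at hd
  have hab : |h.1.det⁻¹| = 1 := by
    rw [abs_inv]
    have : |h.1.det| = 1 := by
      rcases mul_self_eq_one_iff.mp hd with h | h <;> simp [h]
    simp [this]
  have hmap := Real.map_matrix_volume_pi_eq_smul_volume_pi hd0
  rw [hab, ENNReal.ofReal_one, one_smul] at hmap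
  have hmp : MeasurePreserving (toLin' h.1) (volume : Measure (Fin m → ℝ)) volume :=
    ⟨(LinearMap.continuous_of_finiteDimensional _).measurable, hmap⟩
  have hemb : MeasurableEmbedding (toLin' h.1 : (Fin m → ℝ) → (Fin m → ℝ)) := by
    apply (LinearMap.continuous_of_finiteDimensional _).measurableEmbedding
    intro x y hxy
    have := congrArg (fun z => h.1ᵀ *ᵥ z) hxy
    simpa [Matrix.mulVec_mulVec, h1] using this
  have := hmp.integral_comp hemb f
  simpa using this

theorem rot_avg (m N : ℕ) (w : ℕ → ℂ) (x : Fin (m + 1) → ℝ) :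
    ∫ h, Ph (N + 1) w (h.1 *ᵥ x) ∂(hO (m + 1)) =
      cpw (∑ i, x i ^ 2) (∑ j ∈ Finset.range (N + 1), w j) * AA m (N + 1) w := by
  by_cases hx : x = 0
  · subst hx
    have : Ph (N + 1) w (0 : Fin (m + 1) → ℝ) = 0 := by
      unfold Ph
      apply Finset.prod_eq_zero (i := 0) (by simp)
      rw [ps_one]
      simp [cpw]
    simp [this, cpw_zero]
  have hpos : 0 < ∑ i, x i ^ 2 := by
    obtain ⟨i, hi⟩ := Function.ne_iff.mp hx
    exact Finset.sum_pos' (fun _ _ => sq_nonneg _) ⟨i, Finset.mem_univ _, by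
      have : x i ≠ 0 := hi
      positivity⟩
  set t := √(∑ i, x i ^ 2) with ht
  have ht0 : 0 < t := Real.sqrt_pos.mpr hpos
  have ht2 : t ^ 2 = ∑ i, x i ^ 2 := Real.sq_sqrt hpos.le
  set v := t⁻¹ • x with hv
  have hxv : x = t • v := by rw [hv, smul_smul, mul_inv_cancel₀ ht0.ne', one_smul]
  have hvv : v ⬝ᵥ v = 1 := by
    have : x ⬝ᵥ x = t ^ 2 := by rw [ht2]; simp [dotProduct, sq]
    rw [hv, smul_dotProduct, dotProduct_smul, this]
    simp
    field_simp
  obtain ⟨c, hc, hcv⟩ := exists_rot v hvv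
  rw [← ht2]
  have e : ∀ h : OG (m + 1), Ph (N + 1) w (h.1 *ᵥ x)
      = cpw (t ^ 2) (∑ j ∈ Finset.range (N + 1), w j) * Ph (N + 1) w (h.1 *ᵥ v) := by
    intro h
    conv_lhs => rw [hxv]
    rw [Matrix.mulVec_smul, Ph_smul _ _ _ ht0.ne']
  simp only [e]
  rw [integral_const_mul]
  congr 1
  rw [← integral_mul_right_eq_self _ (⟨c, hc⟩ : OG (m + 1))]
  unfold AA
  congr 1
  ext h
  congr 1
  show (h.1 * c) *ᵥ v = _
  rw [← Matrix.mulVec_mulVec, hcv]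
  ext i
  simp


/-- Gaussian integral of the radial product -/
def II (m N : ℕ) (w : ℕ → ℂ) : ℂ :=
  ∫ x : Fin m → ℝ, Ph N w x * (Real.exp (-∑ i, x i ^ 2) : ℂ)

theorem gauss_int (m : ℕ) : Integrable fun x : Fin m → ℝ => Real.exp (-(∑ i, x i ^ 2) / 2) := by
  have h := (GaussianFourier.integrable_cexp_neg_mul_sum_add (ι := Fin m) (b := 1 / 2)
    (by norm_num) 0).norm
  refine h.congr (Filter.Eventually.of_forall fun x => ?_)
  simp only [Pi.zero_apply, zero_mul, Finset.sum_const_zero, add_zero]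
  rw [Complex.norm_exp]
  congr 1
  have : (-(1 / 2 : ℂ) * ∑ i, (x i : ℂ) ^ 2) = ((-(∑ i, x i ^ 2) / 2 : ℝ) : ℂ) := by
    push_cast
    ring
  rw [this, Complex.ofReal_re]

theorem pt_bound {m : ℕ} (N : ℕ) (w : ℕ → ℂ) (hw : ∀ j, 0 ≤ (w j).re) (h : OG m)
    (x : Fin m → ℝ) :
    ‖Ph N w (h.1 *ᵥ x) * (Real.exp (-∑ i, x i ^ 2) : ℂ)‖ ≤
      Real.exp ((∑ j ∈ Finset.range N, (w j).re) *
        Real.log (2 * (∑ j ∈ Finset.range N, (w j).re) + 1)) * Real.exp (-(∑ i, x i ^ 2) / 2) := by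
  have h1 := norm_Ph_le N w hw (h.1 *ᵥ x)
  rw [nn_orth] at h1
  have h2 := log_bound (∑ j ∈ Finset.range N, (w j).re) (∑ i, x i ^ 2)
    (Finset.sum_nonneg fun j _ => hw j) (Finset.sum_nonneg fun i _ => sq_nonneg _)
  rw [norm_mul, Complex.norm_real, Real.norm_of_nonneg (Real.exp_nonneg _)]
  refine (mul_le_mul_of_nonneg_right h1 (Real.exp_nonneg _)).trans ?_
  rw [← Real.exp_add, ← Real.exp_add]
  apply Real.exp_le_exp.mpr
  linarith

theorem lemG (m N : ℕ) (w : ℕ → ℂ) (hw : ∀ j, 0 ≤ (w j).re) :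
    II (m + 1) (N + 1) w =
      AA m (N + 1) w * MM (m + 1) (∑ j ∈ Finset.range (N + 1), w j) := by
  have e1 : ∀ h : OG (m + 1), ∫ x : Fin (m + 1) → ℝ,
      Ph (N + 1) w (h.1 *ᵥ x) * (Real.exp (-∑ i, x i ^ 2) : ℂ) = II (m + 1) (N + 1) w := by
    intro h
    have := vol_orth h (fun x => Ph (N + 1) w x * (Real.exp (-∑ i, x i ^ 2) : ℂ))
    simp only [nn_orth] at this
    exact this
  have e2 : II (m + 1) (N + 1) w = ∫ h : OG (m + 1), (∫ x : Fin (m + 1) → ℝ,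
      Ph (N + 1) w (h.1 *ᵥ x) * (Real.exp (-∑ i, x i ^ 2) : ℂ)) ∂(hO (m + 1)) := by
    simp only [e1]
    simp
  rw [e2, integral_integral_swap]
  · unfold MM
    rw [← integral_const_mul]
    congr 1
    ext x
    rw [integral_mul_const, rot_avg]
    ring
  · have hG := ((gauss_int (m + 1)).const_mul
      (Real.exp ((∑ j ∈ Finset.range (N + 1), (w j).re) *
        Real.log (2 * (∑ j ∈ Finset.range (N + 1), (w j).re) + 1)))).comp_snd (hO (m + 1))
    refine hG.mono' ?_ (Filter.Eventually.of_forall fun p => pt_bound _ w hw p.1 p.2)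
    apply Measurable.aestronglyMeasurable
    refine Measurable.mul ?_ ?_
    · refine (meas_Ph (N + 1) w).comp ?_
      apply Continuous.measurable
      fun_prop
    · apply Continuous.measurable
      fun_prop

theorem ps_castSucc {m : ℕ} (r : ℕ) (h : r ≤ m) (x : Fin (m + 1) → ℝ) :
    ps r x = ps r (fun i : Fin m => x i.castSucc) := by
  unfold ps
  rw [Fin.sum_univ_castSucc]
  simp
  omega

theorem fub (m N : ℕ) (w : ℕ → ℂ) (h : 2 * N ≤ m + 1) :
    II (m + 1) N w = √Real.pi * II m N w := by
  unfold II
  have hp := volume_preserving_piFinSuccAbove (fun _ : Fin (m + 1) => ℝ) (Fin.last m)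
  have hc := hp.integral_comp' (fun p : ℝ × (Fin m → ℝ) =>
    (Real.exp (-1 * p.1 ^ 2) : ℂ) * (Ph N w p.2 * (Real.exp (-∑ i, p.2 i ^ 2) : ℂ)))
  have hm : ∫ p : ℝ × (Fin m → ℝ), 
    (Real.exp (-1 * p.1 ^ 2) : ℂ) * (Ph N w p.2 * (Real.exp (-∑ i, p.2 i ^ 2) : ℂ))
    = (∫ a : ℝ, (Real.exp (-1 * a ^ 2) : ℂ)) *
      ∫ x : Fin m → ℝ, Ph N w x * (Real.exp (-∑ i, x i ^ 2) : ℂ) :=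
    integral_prod_mul (μ := (volume : Measure ℝ)) (ν := (volume : Measure (Fin m → ℝ)))
      (fun a : ℝ => (Real.exp (-1 * a ^ 2) : ℂ))
      (fun x : Fin m → ℝ => Ph N w x * (Real.exp (-∑ i, x i ^ 2) : ℂ))
  have hg : ∫ a : ℝ, (Real.exp (-1 * a ^ 2) : ℂ) = √Real.pi := by
    rw [integral_complex_ofReal, integral_gaussian, div_one]
  rw [hg] at hm
  rw [← hm]
  refine Eq.trans ?_ hc
  congr 1
  ext x
  have e1 : Ph N w x = Ph N w (fun i : Fin m => x i.castSucc) := by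
    unfold Ph
    refine Finset.prod_congr rfl fun j hj => ?_
    rw [ps_castSucc _ (by have := Finset.mem_range.mp hj; omega)]
  have e2 : MeasurableEquiv.piFinSuccAbove (fun _ : Fin (m + 1) => ℝ) (Fin.last m) x
      = (x (Fin.last m), fun i : Fin m => x i.castSucc) := by
    ext i
    · rfl
    · simp [MeasurableEquiv.piFinSuccAbove]
      rfl
  rw [e2, e1, Fin.sum_univ_castSucc, neg_add, Real.exp_add]
  push_cast
  ring_nf

theorem col_norm {m : ℕ} (h : OG (m + 1)) : ∑ i, h.1 i 0 ^ 2 = 1 := by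
  have h1 : h.1ᵀ * h.1 = 1 := (Matrix.mem_orthogonalGroup_iff' _ _).mp h.2
  have := congrFun (congrFun h1 0) 0
  simpa [Matrix.mul_apply, sq] using this

theorem AA_top (N : ℕ) (w : ℕ → ℂ) : AA (2 * N) (N + 1) w = AA (2 * N) N w := by
  unfold AA
  congr 1
  ext h
  unfold Ph
  rw [Finset.prod_range_succ, ps_full _ (le_refl _), col_norm, cpw_one, mul_one]

theorem sum_re_nonneg (N : ℕ) (w : ℕ → ℂ) (hw : ∀ j, 0 ≤ (w j).re) :
    0 ≤ (∑ j ∈ Finset.range N, w j).re := by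
  rw [Complex.re_sum]
  exact Finset.sum_nonneg fun j _ => hw j

theorem den_ne (N : ℕ) (W : ℂ) (hW : 0 ≤ W.re) : (2 * N + 1 + 2 * W : ℂ) ≠ 0 := by
  intro h
  have h' := congrArg Complex.re h
  simp at h'
  have : (0 : ℝ) ≤ N := Nat.cast_nonneg N
  linarith

theorem A0_succ (N : ℕ) (w : ℕ → ℂ) (hw : ∀ j, 0 ≤ (w j).re) :
    A0 (N + 1) w = A0 N w *
      ((2 * N + 1) / (2 * N + 1 + 2 * ∑ j ∈ Finset.range (N + 1), w j)) := by
  have a1 : A0 (N + 1) w = AA (2 * N + 2) (N + 1) w := AA_top (N + 1) w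
  have a2 : A0 N w = AA (2 * N) (N + 1) w := rfl
  have g1 := lemG (2 * N + 2) N w hw
  have g2 := lemG (2 * N) N w hw
  have f1 := fub (2 * N + 2) (N + 1) w (by omega)
  have f2 := fub (2 * N + 1) (N + 1) w (by omega)
  have hW := sum_re_nonneg (N + 1) w hw
  have hr := MM_rec (2 * N + 1) (by omega) _ hW
  have hne := MM_ne (2 * N + 1) (by omega) _ hW
  have hne2 := MM_ne (2 * N + 1 + 2) (by omega) _ hW
  have hd := den_ne N _ hW
  rw [a1, a2]
  have hpi : (√Real.pi : ℂ) * √Real.pi = Real.pi := by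
    rw [← Complex.ofReal_mul, Real.mul_self_sqrt Real.pi_pos.le]
  have f3 : II (2 * N + 2 + 1) (N + 1) w = Real.pi * II (2 * N + 1) (N + 1) w := by
    rw [f1, f2, ← hpi]; ring
  rw [g1, g2] at f3
  have hpi0 : (Real.pi : ℂ) ≠ 0 := by exact_mod_cast Real.pi_ne_zero
  generalize (∑ j ∈ Finset.range (N + 1), w j) = W at *
  change AA (2 * N + 2) (N + 1) w * MM (2 * N + 1 + 2) W = _ at f3
  generalize AA (2 * N + 2) (N + 1) w = P at *
  generalize AA (2 * N) (N + 1) w = Q at *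
  generalize MM (2 * N + 1 + 2) W = R at *
  generalize MM (2 * N + 1) W = S at *
  push_cast at hr
  rw [← mul_div_assoc, eq_div_iff hd]
  have : Real.pi * S * (P * (2 * N + 1 + 2 * W)) = Real.pi * S * (Q * (2 * N + 1)) := by
    linear_combination (-2 * P) * hr + (2 * N + 1) * f3
  exact mul_left_cancel₀ (mul_ne_zero hpi0 hne) this

theorem A0_zero (w : ℕ → ℂ) : A0 0 w = 1 := by
  have a1 : A0 0 w = AA (2 * 0) 0 w := AA_top 0 w
  rw [a1]
  simp [AA, Ph]

theorem A0_eq (N : ℕ) (w : ℕ → ℂ) (hw : ∀ j, 0 ≤ (w j).re) :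
    A0 N w = ∏ l ∈ Finset.range N,
      ((2 * l + 1 : ℂ) / (2 * l + 1 + 2 * ∑ j ∈ Finset.range (l + 1), w j)) := by
  induction N with
  | zero => rw [A0_zero]; simp
  | succ N ih => rw [A0_succ N w hw, ih, Finset.prod_range_succ]


theorem fact_row (n : ℕ) : ((Nat.factorial (2 * n) : ℂ) / (Nat.factorial n : ℂ)) =
    ∏ l ∈ Finset.range n, (2 * (2 * l + 1) : ℂ) := by
  induction n with
  | zero => simp
  | succ n ih =>
    rw [Finset.prod_range_succ, ← ih]
    have h1 : (Nat.factorial n : ℂ) ≠ 0 := by exact_mod_cast Nat.factorial_ne_zero n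
    have h2 : (n : ℂ) + 1 ≠ 0 := by exact_mod_cast Nat.succ_ne_zero n
    rw [show 2 * (n + 1) = 2 * n + 1 + 1 by ring, Nat.factorial_succ, Nat.factorial_succ,
      Nat.factorial_succ]
    push_cast
    field_simp
    ring

/-- product over pairs -/
def PP (n : ℕ) (S : ℕ → ℂ) : ℂ :=
  ∏ p ∈ Finset.univ.filter (fun p : Fin n × Fin n => p.1 < p.2), (2 * (S p.1 - S p.2 - 1))

theorem PP_succ (n : ℕ) (S : ℕ → ℂ) :
    PP (n + 1) S = (∏ l ∈ Finset.range n, (2 * (S 0 - S (l + 1) - 1))) *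
      PP n (fun j => S (j + 1)) := by
  unfold PP
  rw [Finset.prod_filter, Finset.prod_filter, Fintype.prod_prod_type, Fintype.prod_prod_type,
    Fin.prod_univ_succ]
  congr 1
  · rw [Fin.prod_univ_succ, ← Fin.prod_univ_eq_prod_range (fun l => 2 * (S 0 - S (l + 1) - 1))]
    simp
  · refine Finset.prod_congr rfl fun i _ => ?_
    rw [Fin.prod_univ_succ]
    simp

theorem VV_eq (n : ℕ) : ∀ (w S : ℕ → ℂ), (∀ j, 0 ≤ (w j).re) →
    (∀ j, j + 1 < n → S j - S (j + 1) = 2 * w j + 2) →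
    VV n w = (∏ j ∈ Finset.range n, ((Nat.factorial (2 * j) : ℂ) / (Nat.factorial j : ℂ))) /
      PP n S := by
  induction n with
  | zero => intro w S _ _; simp [VV, PP]
  | succ n ih =>
    intro w S hw hS
    rw [VV, ih (fun j => w (j + 1)) (fun j => S (j + 1)) (fun j => hw _)
      (fun j hj => hS (j + 1) (by omega)), PP_succ, Finset.prod_range_succ, A0_eq n w hw, fact_row]
    have key : ∀ l, l < n → S 0 - S (l + 1) - 1
        = 2 * l + 1 + 2 * ∑ j ∈ Finset.range (l + 1), w j := by
      intro l
      induction l with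
      | zero =>
        intro hl
        have := hS 0 (by omega)
        simp at this ⊢
        linear_combination this
      | succ l ihl =>
        intro hl
        have h1 := ihl (by omega)
        have h2 := hS (l + 1) (by omega)
        rw [Finset.sum_range_succ]
        push_cast
        linear_combination h1 + h2
    have hrow : ∏ l ∈ Finset.range n, ((2 * l + 1 : ℂ) /
          (2 * l + 1 + 2 * ∑ j ∈ Finset.range (l + 1), w j))
        = (∏ l ∈ Finset.range n, (2 * (2 * l + 1) : ℂ)) /
          ∏ l ∈ Finset.range n, (2 * (S 0 - S (l + 1) - 1)) := by
      rw [← Finset.prod_div_distrib]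
      refine Finset.prod_congr rfl fun l hl => ?_
      rw [key l (Finset.mem_range.mp hl), mul_div_mul_left _ _ two_ne_zero]
    rw [hrow]
    rw [div_mul_div_comm, mul_comm (∏ l ∈ Finset.range n, (2 * (2 * l + 1) : ℂ))]

theorem Dmat_anti (n : ℕ) : (Dmat (fun _ : Fin n => 1))ᵀ = -Dmat (fun _ : Fin n => 1) := by
  ext i j
  simp only [Dmat, Matrix.transpose_apply, Matrix.neg_apply, Matrix.of_apply]
  split_ifs <;> first | (exfalso; omega) | norm_num

theorem Dmat_orth (n : ℕ) :
    Dmat (fun _ : Fin n => 1) * (Dmat (fun _ : Fin n => 1))ᵀ = 1 := by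
  ext i j
  rw [Matrix.mul_apply]
  have hi := i.isLt
  obtain ⟨k, hk⟩ : ∃ k : Fin (2 * n), k.val = if i.val % 2 = 0 then i.val + 1 else i.val - 1 :=
    ⟨⟨if i.val % 2 = 0 then i.val + 1 else i.val - 1, by split_ifs <;> omega⟩, rfl⟩
  rw [Finset.sum_eq_single k]
  · simp only [Dmat, Matrix.transpose_apply, Matrix.of_apply, Matrix.one_apply, Fin.ext_iff]
    split_ifs at * <;> first | (exfalso; omega) | norm_num
  · intro b _ hb
    have hb' : b.val ≠ k.val := fun h => hb (Fin.ext h)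
    apply mul_eq_zero_of_left
    simp only [Dmat, Matrix.of_apply]
    split_ifs at * <;> first | (exfalso; omega) | norm_num
  · simp

theorem cpw_orth {m : ℕ} (X : Matrix (Fin m) (Fin m) ℝ) (h : X * Xᵀ = 1) (w : ℂ) :
    cpw X.det w = 1 := by
  have hd : X.det * X.det = 1 := by
    have := congrArg Matrix.det h
    simpa using this
  rcases mul_self_eq_one_iff.mp hd with h | h <;> simp [h, cpw]

theorem main_thm (n : ℕ)
    (μ : Measure (OG (2 * n))) (hμ : μ.IsHaarMeasure) (hμ1 : IsProbabilityMeasure μ)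
    (s : Fin n → ℂ)
    (hre : ∀ j : Fin n, ∀ h : j.val + 1 < n, 2 ≤ (s j - s ⟨j.val + 1, h⟩).re) :
    sphInt n μ s (Dmat (fun _ => 1)) =
      (∏ j ∈ Finset.range n, ((Nat.factorial (2 * j) : ℂ) / (Nat.factorial j : ℂ))) /
        ∏ p ∈ Finset.univ.filter (fun p : Fin n × Fin n => p.1 < p.2),
          (2 * (s p.1 - s p.2 - 1)) := by
  have hμe := eq_hO (2 * n) μ hμ hμ1
  subst hμe
  let w : ℕ → ℂ := fun j => if h : j + 1 < n then expo n s ⟨j, by omega⟩ else 0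
  let S : ℕ → ℂ := fun j => if h : j < n then s ⟨j, h⟩ else 0
  have hw : ∀ j, 0 ≤ (w j).re := by
    intro j
    by_cases h : j + 1 < n
    · have h1 := hre ⟨j, by omega⟩ h
      simp only [w, h, dif_pos, expo]
      have : ∀ z : ℂ, (z / 2 - 1).re = z.re / 2 - 1 := by
        intro z
        simp
      rw [this]
      linarith
    · simp [w, h]
  have hS : ∀ j, j + 1 < n → S j - S (j + 1) = 2 * w j + 2 := by
    intro j h
    simp only [S, w, h, show j < n by omega, dif_pos, expo]
    ring
  have hV := VV_eq n w S hw hS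
  have hP : PP n S = ∏ p ∈ Finset.univ.filter (fun p : Fin n × Fin n => p.1 < p.2),
          (2 * (s p.1 - s p.2 - 1)) := by
    unfold PP
    refine Finset.prod_congr rfl fun p _ => ?_
    simp [S]
  rw [← hP, ← hV, ← main_rec n w hw _ (Dmat_anti n) (Dmat_orth n)]
  unfold sphInt
  congr 1
  ext k
  unfold FF
  refine Finset.prod_congr rfl fun j _ => ?_
  by_cases h : j.val + 1 < n
  · have : w j = expo n s j := by simp [w, h]
    rw [this]
    rfl
  · have hj : j.val + 1 = n := by have := j.isLt; omega
    have hfull : ∀ (Y : Matrix (Fin (2 * n)) (Fin (2 * n)) ℝ) (r : ℕ) (hr : r ≤ 2 * n)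
        (_ : r = 2 * n), Y * Yᵀ = 1 → ∀ v, cpw (Y.submatrix (Fin.castLE hr) (Fin.castLE hr)).det v = 1 := by
      intro Y r hr hr2 hY v
      subst hr2
      exact cpw_orth Y hY v
    have hY := cj_orth k _ (Dmat_orth n)
    rw [show (ld (show 2 * (j.val + 1) ≤ 2 * n by have := j.isLt; omega)
      (cj k (Dmat fun _ => 1))) = (cj k (Dmat fun _ => 1)).submatrix
        (Fin.castLE (show 2 * (j.val + 1) ≤ 2 * n by have := j.isLt; omega))
        (Fin.castLE (show 2 * (j.val + 1) ≤ 2 * n by have := j.isLt; omega)) from rfl]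
    rw [hfull _ _ _ (by omega) hY]
    exact hfull _ _ _ (by omega) hY _


/-- Eq. (A.5) of the paper: the value of `f_n(s, D(1))`. -/
theorem sphInt_at_identity (n : ℕ) (hn : 1 ≤ n)
    (μ : Measure (OG (2 * n))) (hμ : μ.IsHaarMeasure) (hμ1 : IsProbabilityMeasure μ)
    (s : Fin n → ℂ) (hs : Function.Injective s)
    (hre : ∀ j : Fin n, ∀ h : j.val + 1 < n, 2 ≤ (s j - s ⟨j.val + 1, h⟩).re) :
    sphInt n μ s (Dmat (fun _ => 1)) =
      (∏ j ∈ Finset.range n, ((Nat.factorial (2 * j) : ℂ) / (Nat.factorial j : ℂ))) /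
        ∏ p ∈ Finset.univ.filter (fun p : Fin n × Fin n => p.1 < p.2),
          (2 * (s p.1 - s p.2 - 1)) := by
  exact main_thm n μ hμ hμ1 s hre

end
end

section
/- Let n ≥ 1 and let p ∈ L¹((0,∞)ⁿ) be symmetric under permutations of its arguments. For t ∈ ℝⁿ set σ(t)_j := i·t_j + 3n − 2j (j = 1,…,n) and define Ŝp(σ(t)) := (∏_{j=0}^{n−1} 2^j·j!) · ∫_{(0,∞)ⁿ} p(a) · (∏_j a_j)^{−(2n−1)} · det[a_c^{σ(t)_b+n−1}]_{b,c=1..n} / (Δ_n(a²)·Δ_n(σ(t)_1,…,σ(t)_n)) da, and assume this integral converges absolutely for every t ∈ ℝⁿ. Let ζ(z) := cos(z) / ∏_{k=1}^n (1 − 4z²/(π(2k−1))²). Then, for almost every a ∈ (0,∞)ⁿ, p(a) = [Δ_n(a²) / ((n!)² ∏_{j=0}^{n−1} 2^j·j!)] · lim_{ε→0⁺} (2π)^{−n} ∫_{ℝⁿ} Ŝp(σ(t)) · (∏_{l=1}^n ζ(ε t_l)) · Δ_n(σ(t)_1,…,σ(t)_n) · det[a_c^{−i t_b − 2n + 2b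 − 1}]_{b,c=1..n} dt. -/
open MeasureTheory Matrix Filter
open scoped BigOperators Real Topology

noncomputable section

/-- The shifted contour parameters `σ(t)_j = i t_j + 3n - 2j`, `j = 1,…,n`. -/
def sigC (n : ℕ) (t : Fin n → ℝ) (j : Fin n) : ℂ :=
  Complex.I * (t j : ℂ) + 3 * (n : ℂ) - 2 * ((j : ℕ) + 1 : ℂ)

/-- The spherical transform `Ŝp(σ(t))` of a symmetric function `p ∈ L¹((0,∞)ⁿ)`. -/
def ShatP (n : ℕ) (p : (Fin n → ℝ) → ℝ) (t : Fin n → ℝ) : ℂ :=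
  ((∏ j ∈ Finset.range n, 2 ^ j * Nat.factorial j : ℕ) : ℂ) *
    ∫ a in {a : Fin n → ℝ | ∀ j, 0 < a j},
      ((p a * (∏ j, a j) ^ (-(2 * (n : ℝ) - 1)) : ℝ) : ℂ) *
        (Matrix.of fun b c : Fin n => cpw (a c) (sigC n t b + (n : ℂ) - 1)).det /
          (((vdm fun j => (a j) ^ 2 : ℝ) : ℂ) * vdm (sigC n t))

lemma vdm_eq_det {m : ℕ} {R : Type*} [CommRing R] (x : Fin m → R) :
    vdm x = (Matrix.vandermonde x).det := by
  rw [Matrix.det_vandermonde, vdm, Finset.prod_filter, Fintype.prod_prod_type]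
  refine Finset.prod_congr rfl fun i _ => ?_
  rw [← Finset.prod_filter]
  refine Finset.prod_congr ?_ fun _ _ => rfl
  ext j; simp

lemma vdm_succ {m : ℕ} {R : Type*} [CommRing R] (x : Fin (m+1) → R) :
    vdm x = (∏ k : Fin m, (x k.succ - x 0)) * vdm (fun k : Fin m => x k.succ) := by
  rw [vdm_eq_det, vdm_eq_det, Matrix.det_vandermonde, Matrix.det_vandermonde, Fin.prod_univ_succ,
    Fin.prod_Ioi_zero]
  congr 1
  refine Finset.prod_congr rfl fun i _ => ?_
  rw [Fin.prod_Ioi_succ]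

lemma vdm_perm {m : ℕ} {R : Type*} [CommRing R] (x : Fin m → R) (e : Equiv.Perm (Fin m)) :
    vdm (fun i => x (e i)) = (Equiv.Perm.sign e : ℤ) * vdm x := by
  rw [vdm_eq_det, vdm_eq_det, ← Matrix.det_permute]
  rfl

lemma vdm_pos {m : ℕ} (x : Fin m → ℝ) (hx : StrictMono x) : 0 < vdm x := by
  refine Finset.prod_pos fun p hp => ?_
  have := hx (Finset.mem_filter.1 hp).2
  linarith

lemma vdm_ne_zero {m : ℕ} {R : Type*} [CommRing R] [IsDomain R] (x : Fin m → R)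
    (hx : Function.Injective x) : vdm x ≠ 0 := by
  refine Finset.prod_ne_zero_iff.2 fun p hp => ?_
  rw [sub_ne_zero]
  exact fun h => (Finset.mem_filter.1 hp).2.ne' (hx h)

lemma vdm_continuous {m : ℕ} : Continuous (fun y : Fin m → ℝ => vdm y) := by
  unfold vdm; fun_prop

lemma vdm_ofReal {m : ℕ} (x : Fin m → ℝ) : ((vdm x : ℝ) : ℂ) = vdm (fun i => (x i : ℂ)) := by
  simp [vdm]

/-- generalized Vandermonde -/
def gD {m : ℕ} (z : Fin m → ℂ) (x : Fin m → ℝ) : ℂ :=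
  (Matrix.of fun k c : Fin m => (x c : ℂ) ^ (z k)).det

def interl {m : ℕ} (x : Fin (m+1) → ℝ) : Set (Fin m → ℝ) :=
  Set.univ.pi fun i : Fin m => Set.Ioc (x i.castSucc) (x i.succ)

lemma gD_step1 {m : ℕ} (z : Fin (m+1) → ℂ) (x : Fin (m+1) → ℝ) (hx : ∀ i, 0 < x i) :
    gD z x = (∏ c, (x c : ℂ) ^ (z 0)) * (Matrix.of fun k c : Fin m =>
      (x c.succ : ℂ) ^ (z k.succ - z 0) - (x c.castSucc : ℂ) ^ (z k.succ - z 0)).det := by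
  have h1 : gD z x = (∏ c, (x c : ℂ) ^ (z 0)) * (Matrix.of fun k c : Fin (m+1) =>
      (x c : ℂ) ^ (z k - z 0)).det := by
    rw [← Matrix.det_mul_row]
    unfold gD
    congr 1
    ext k c
    simp only [Matrix.of_apply]
    rw [← Complex.cpow_add _ _ (by exact_mod_cast (hx c).ne')]
    congr 1; ring
  rw [h1]
  congr 1
  let B : Matrix (Fin (m+1)) (Fin (m+1)) ℂ := Matrix.of fun k c =>
    Fin.cases ((x 0 : ℂ) ^ (z k - z 0)) (fun j => (x j.succ : ℂ) ^ (z k - z 0)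
      - (x j.castSucc : ℂ) ^ (z k - z 0)) c
  rw [Matrix.det_eq_of_forall_col_eq_smul_add_pred (B := B) (fun _ => 1) (fun i => by simp [B])
    (fun i j => by simp [B])]
  rw [Matrix.det_succ_row_zero, Fin.sum_univ_succ]
  rw [Finset.sum_eq_zero (fun j _ => by simp [B])]
  simp only [B, Matrix.of_apply]
  simp
  congr 1

lemma integral_interl {m : ℕ} (x : Fin (m+1) → ℝ) (f : Fin m → ℝ → ℂ) :
    ∫ y in interl x, ∏ i, f i (y i) =
      ∏ i, ∫ y in Set.Ioc (x i.castSucc) (x i.succ), f i y := by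
  rw [interl, volume_pi, Measure.restrict_pi_pi, integral_fintype_prod_eq_prod]

lemma gD_rec {m : ℕ} (z : Fin (m+1) → ℂ) (x : Fin (m+1) → ℝ) (hx : ∀ i, 0 < x i)
    (hxm : StrictMono x) (hz : ∀ k, (z k).re = (k : ℕ)) :
    gD z x = (∏ c, (x c : ℂ) ^ (z 0)) * (∏ k : Fin m, (z k.succ - z 0)) *
      ∫ y in interl x, gD (fun k : Fin m => z k.succ - z 0 - 1) y := by
  rw [gD_step1 z x hx, mul_assoc]
  congr 1
  have hre : ∀ k : Fin m, (z k.succ - z 0 - 1).re = (k : ℕ) := by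
    intro k; simp [hz]
  have hi : ∀ (k c : Fin m), (∫ y in Set.Ioc (x c.castSucc) (x c.succ), 
      (y : ℂ) ^ (z k.succ - z 0 - 1)) = ((x c.succ : ℂ) ^ (z k.succ - z 0)
        - (x c.castSucc : ℂ) ^ (z k.succ - z 0)) / (z k.succ - z 0) := by
    intro k c
    rw [← intervalIntegral.integral_of_le (hxm (Fin.castSucc_lt_succ)).le, integral_cpow]
    · simp
    · left; rw [hre]; have : (0:ℝ) ≤ (k : ℕ) := by positivity
      linarith
  have hne : ∀ k : Fin m, z k.succ - z 0 ≠ 0 := by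
    intro k h
    have := congrArg Complex.re h
    simp [hz] at this
    norm_cast at this
  have hint : ∀ (σ : Equiv.Perm (Fin m)), IntegrableOn (fun y : Fin m → ℝ =>
      ∏ i, (y i : ℂ) ^ (z (σ i).succ - z 0 - 1)) (interl x) := by
    intro σ
    rw [IntegrableOn, interl, volume_pi, Measure.restrict_pi_pi]
    refine Integrable.fintype_prod (f := fun i (y : ℝ) => (y : ℂ) ^ (z (σ i).succ - z 0 - 1)) ?_
    intro i
    have := (intervalIntegral.intervalIntegrable_cpow' (a := x i.castSucc) (b := x i.succ) 
      (r := z (σ i).succ - z 0 - 1)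
      (by rw [hre]; have : (0:ℝ) ≤ (σ i : ℕ) := by positivity
          linarith)).1
    exact this
  have hdet : (∫ y in interl x, gD (fun k : Fin m => z k.succ - z 0 - 1) y) =
      (Matrix.of fun k c : Fin m => ((x c.succ : ℂ) ^ (z k.succ - z 0)
        - (x c.castSucc : ℂ) ^ (z k.succ - z 0)) / (z k.succ - z 0)).det := by
    simp only [gD, Matrix.det_apply', Matrix.of_apply]
    rw [integral_finsetSum _ (fun σ _ => (hint σ).const_mul _)]
    refine Finset.sum_congr rfl fun σ _ => ?_
    rw [integral_const_mul, integral_interl x (fun i (y : ℝ) => (y : ℂ) ^ (z (σ i).succ - z 0 - 1))]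
    simp only [hi]
  rw [hdet, ← Matrix.det_mul_column]
  congr 1
  ext k c
  simp only [Matrix.of_apply]
  field_simp [hne k]

lemma gD_nat {m : ℕ} (x : Fin m → ℝ) : gD (fun k : Fin m => ((k : ℕ) : ℂ)) x = (vdm x : ℝ) := by
  rw [vdm_ofReal, vdm_eq_det, ← Matrix.det_transpose]
  unfold gD
  congr 1
  ext i j
  simp [Matrix.vandermonde]

lemma interl_mem {m : ℕ} {x : Fin (m+1) → ℝ} (hx : ∀ i, 0 < x i) (hxm : StrictMono x)
    {y : Fin m → ℝ} (hy : y ∈ interl x) : (∀ i, 0 < y i) ∧ StrictMono y := by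
  have hy' : ∀ i, x i.castSucc < y i ∧ y i ≤ x i.succ := fun i => hy i (Set.mem_univ i)
  refine ⟨fun i => (hx _).trans (hy' i).1, fun i j hij => ?_⟩
  exact lt_of_le_of_lt ((hy' i).2.trans (hxm.monotone (Fin.succ_le_castSucc_iff.2 hij))) (hy' j).1

lemma interl_meas {m : ℕ} (x : Fin (m+1) → ℝ) : MeasurableSet (interl x) :=
  MeasurableSet.univ_pi fun _ => measurableSet_Ioc

lemma integrableOn_interl {m : ℕ} (x : Fin (m+1) → ℝ) :
    IntegrableOn (fun y : Fin m → ℝ => vdm y) (interl x) := by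
  have : IsCompact (Set.univ.pi fun i : Fin m => Set.Icc (x i.castSucc) (x i.succ)) :=
    isCompact_univ_pi fun _ => isCompact_Icc
  exact (vdm_continuous.continuousOn.integrableOn_compact this).mono_set
    (Set.pi_mono fun _ _ => Set.Ioc_subset_Icc_self)

lemma vdm_rec {m : ℕ} (x : Fin (m+1) → ℝ) (hx : ∀ i, 0 < x i) (hxm : StrictMono x) :
    ∫ y in interl x, vdm y ≤ vdm x := by
  have h := gD_rec (fun k : Fin (m+1) => ((k : ℕ) : ℂ)) x hx hxm (by simp)
  rw [gD_nat] at h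
  have h2 : (fun k : Fin m => (((k.succ : Fin (m+1)) : ℕ) : ℂ) - (((0 : Fin (m+1)) : ℕ) : ℂ) - 1)
    = fun k : Fin m => ((k : ℕ) : ℂ) := by ext k; simp
  rw [h2] at h
  simp only [gD_nat] at h
  rw [integral_complex_ofReal] at h
  have h3 : vdm x = (∏ k : Fin m, ((k : ℕ) + 1 : ℝ)) * ∫ y in interl x, vdm y := by
    have h4 : ((vdm x : ℝ) : ℂ) = (((∏ k : Fin m, ((k : ℕ) + 1 : ℝ)) * ∫ y in interl x, vdm y : ℝ) : ℂ) := by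
      rw [h]; push_cast; simp
    exact_mod_cast h4
  rw [h3]
  refine le_mul_of_one_le_left ?_ ?_
  · exact setIntegral_nonneg (interl_meas x) fun y hy => (vdm_pos y (interl_mem hx hxm hy).2).le
  · calc (1:ℝ) = ∏ k : Fin m, 1 := by simp
      _ ≤ _ := Finset.prod_le_prod (fun _ _ => zero_le_one) fun k _ => by simp

lemma gD_bound : ∀ {m : ℕ} (z : Fin m → ℂ) (x : Fin m → ℝ) (_ : ∀ i, 0 < x i)
    (_ : StrictMono x) (_ : ∀ k, (z k).re = (k : ℕ)), ‖gD z x‖ ≤ ‖vdm z‖ * vdm x := by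
  intro m
  induction m with
  | zero => intro z x _ _ _; simp [gD, vdm]
  | succ m ih =>
    intro z x hx hxm hz
    rw [gD_rec z x hx hxm hz, norm_mul, norm_mul]
    have h1 : ‖∏ c, (x c : ℂ) ^ (z 0)‖ = 1 := by
      rw [norm_prod]
      refine Finset.prod_eq_one fun c _ => ?_
      rw [Complex.norm_cpow_eq_rpow_re_of_pos (hx c), hz]; simp
    rw [h1, one_mul]
    have h2 : vdm (fun k : Fin m => z k.succ - z 0 - 1) = vdm (fun k : Fin m => z k.succ) := by
      unfold vdm
      refine Finset.prod_congr rfl fun p _ => by ring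
    have h3 : ‖∫ y in interl x, gD (fun k : Fin m => z k.succ - z 0 - 1) y‖ ≤
        ∫ y in interl x, ‖vdm (fun k : Fin m => z k.succ)‖ * vdm y := by
      refine norm_integral_le_of_norm_le ((integrableOn_interl x).const_mul _) ?_
      refine (ae_restrict_iff' (interl_meas x)).2 (Eventually.of_forall fun y hy => ?_)
      rw [← h2]
      refine ih _ y (interl_mem hx hxm hy).1 (interl_mem hx hxm hy).2 ?_
      intro k; simp [hz]
    rw [integral_const_mul] at h3
    rw [vdm_succ z, norm_mul, mul_assoc]
    refine mul_le_mul_of_nonneg_left (h3.trans ?_) (norm_nonneg _)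
    exact mul_le_mul_of_nonneg_left (vdm_rec x hx hxm) (norm_nonneg _)

lemma norm_sign_mul {m : ℕ} (e : Equiv.Perm (Fin m)) (w : ℂ) :
    ‖(((Equiv.Perm.sign e : ℤˣ) : ℤ) : ℂ) * w‖ = ‖w‖ := by
  rcases Int.units_eq_one_or (Equiv.Perm.sign e) with h | h <;> simp [h]

lemma gD_bound' {m : ℕ} (z : Fin m → ℂ) (x : Fin m → ℝ) (hx : ∀ i, 0 < x i)
    (hxi : Function.Injective x) (hz : ∀ k, (z k).re = (k : ℕ)) :
    ‖gD z x‖ ≤ ‖vdm z‖ * |vdm x| := by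
  have hm : StrictMono (x ∘ Tuple.sort x) :=
    (Tuple.monotone_sort x).strictMono_of_injective (hxi.comp (Tuple.sort x).injective)
  have h := gD_bound z (x ∘ Tuple.sort x) (fun i => hx _) hm hz
  have h1 : gD z (x ∘ Tuple.sort x) = (Equiv.Perm.sign (Tuple.sort x) : ℤ) * gD z x := by
    unfold gD
    rw [← Matrix.det_permute']
    rfl
  rw [h1, norm_sign_mul] at h
  have h2 := vdm_perm x (Tuple.sort x)
  have h3 : vdm (x ∘ Tuple.sort x) = |vdm x| := by
    rw [← abs_of_pos (vdm_pos _ hm)]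
    change |vdm (fun i => x (Tuple.sort x i))| = _
    rw [h2, abs_mul]
    rcases Int.units_eq_one_or (Equiv.Perm.sign (Tuple.sort x)) with h | h <;> simp [h]
  rwa [h3] at h

/-- exponent -/
def ex (n : ℕ) (b : Fin n) : ℝ := 2 * (n : ℝ) - 2 * ((b : ℕ) + 1)

def Ddet (n : ℕ) (t a : Fin n → ℝ) : ℂ :=
  (Matrix.of fun b c : Fin n =>
    Complex.exp ((Complex.I * (t b : ℂ) + (ex n b : ℂ)) * (Real.log (a c) : ℂ))).det

lemma Ddet_bound (n : ℕ) (t a : Fin n → ℝ) (ha : ∀ i, 0 < a i) (hai : Function.Injective a) :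
    ‖Ddet n t a‖ ≤ ‖vdm (sigC n t)‖ * |vdm fun j => (a j) ^ 2| := by
  set z : Fin n → ℂ := fun k => (sigC n t (Fin.rev k) - n) / 2 with hzd
  set x : Fin n → ℝ := fun j => (a j) ^ 2 with hxd
  have hx : ∀ i, 0 < x i := fun i => pow_pos (ha i) 2
  have hxi : Function.Injective x := by
    intro i j hij
    exact hai ((pow_left_inj₀ (ha i).le (ha j).le two_ne_zero).1 hij)
  have hz : ∀ k, (z k).re = (k : ℕ) := by
    intro k
    have hk := k.2
    have h1 : (((Fin.rev k : Fin n) : ℕ) : ℝ) = n - (k + 1) := by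
      rw [Fin.val_rev, Nat.cast_sub (by omega)]; push_cast; ring
    have : z k = ((((k:ℕ) : ℝ) : ℂ)) + Complex.I * ((t (Fin.rev k) / 2 : ℝ) : ℂ) := by
      have h2 : (((Fin.rev k : Fin n) : ℕ) : ℂ) = n - (k + 1) := by exact_mod_cast h1
      simp only [hzd, sigC, h2]; push_cast; ring
    rw [this]; simp
  have h := gD_bound' z x hx hxi hz
  have h1 : ‖gD z x‖ = ‖Ddet n t a‖ := by
    rw [← norm_sign_mul Fin.revPerm (gD z x)]
    unfold gD Ddet
    rw [← Matrix.det_permute]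
    congr 2
    ext b c
    simp only [Matrix.submatrix_apply, Matrix.of_apply, Fin.revPerm_apply, id]
    rw [Complex.cpow_def_of_ne_zero (by exact_mod_cast (hx c).ne'), ← Complex.ofReal_log (hx c).le]
    congr 1
    simp only [hzd, hxd, sigC, ex, Fin.rev_rev, Real.log_pow]
    push_cast; ring
  have h2 : ‖vdm z‖ ≤ ‖vdm (sigC n t)‖ := by
    have h3 := vdm_perm z Fin.revPerm
    rw [← norm_sign_mul Fin.revPerm (vdm z), ← h3]
    unfold vdm
    rw [norm_prod, norm_prod]
    refine Finset.prod_le_prod (fun _ _ => norm_nonneg _) fun p _ => ?_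
    simp only [hzd, Fin.revPerm_apply, Fin.rev_rev]
    rw [← sub_div, norm_div]
    simp only [sub_sub_sub_cancel_right, Complex.norm_ofNat]
    linarith [norm_nonneg (sigC n t p.2 - sigC n t p.1)]
  rw [h1] at h
  exact h.trans (mul_le_mul_of_nonneg_right h2 (abs_nonneg _))

def Ik (k : ℕ) (z : ℝ) : ℝ := ∫ x in (-1:ℝ)..1, Real.cos (π / 2 * x) ^ (2 * k + 1) * Real.cos (z * x)

lemma Ik_zero (z : ℝ) : Ik 0 z * (1 - 4 * z ^ 2 / (π * (2 * ((0:ℕ) : ℝ) + 1)) ^ 2)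
    = 4 / π * Real.cos z := by
  have hd : ∀ x ∈ Set.uIcc (-1:ℝ) 1, HasDerivAt (fun x : ℝ =>
      -(π/2) * Real.sin (π / 2 * x) * Real.cos (z * x) + z * Real.cos (π/2 * x) * Real.sin (z * x))
      ((z ^ 2 - (π/2)^2) * (Real.cos (π / 2 * x) ^ (2 * 0 + 1) * Real.cos (z * x))) x := by
    intro x _
    have h1 : HasDerivAt (fun x : ℝ => π/2 * x) (π/2) x := by
      simpa using (hasDerivAt_id x).const_mul (π/2)
    have h2 : HasDerivAt (fun x : ℝ => z * x) z x := by
      simpa using (hasDerivAt_id x).const_mul z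
    have h := ((h1.sin.const_mul (-(π/2))).mul h2.cos).add ((h1.cos.const_mul z).mul h2.sin)
    refine h.congr_deriv ?_
    ring
  have h := intervalIntegral.integral_eq_sub_of_hasDerivAt hd
    (Continuous.intervalIntegrable (by fun_prop) _ _)
  rw [intervalIntegral.integral_const_mul] at h
  change _ * Ik 0 z = _ at h
  simp at h
  have hpi := Real.pi_pos
  field_simp at h ⊢
  simp
  linarith

lemma Ik_succ (k : ℕ) (z : ℝ) : Ik (k+1) z * (1 - 4 * z ^ 2 / (π * (2 * ((k+1:ℕ) : ℝ) + 1)) ^ 2)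
    = (2 * k + 2) / (2 * k + 3) * Ik k z := by
  have hd : ∀ x ∈ Set.uIcc (-1:ℝ) 1, HasDerivAt (fun x : ℝ =>
      (-(π/2) * (2 * k + 3)) * (Real.cos (π/2 * x) ^ (2 * k + 2) * Real.sin (π / 2 * x)) * Real.cos (z * x)
        + z * Real.cos (π/2 * x) ^ (2 * k + 3) * Real.sin (z * x))
      ((z ^ 2 - (π/2)^2 * (2 * k + 3) ^ 2) * (Real.cos (π / 2 * x) ^ (2 * (k+1) + 1) * Real.cos (z * x))
        + (2 * k + 3) * (2 * k + 2) * (π/2)^2 * 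
          (Real.cos (π / 2 * x) ^ (2 * k + 1) * Real.cos (z * x))) x := by
    intro x _
    have h1 : HasDerivAt (fun x : ℝ => π/2 * x) (π/2) x := by
      simpa using (hasDerivAt_id x).const_mul (π/2)
    have h2 : HasDerivAt (fun x : ℝ => z * x) z x := by
      simpa using (hasDerivAt_id x).const_mul z
    have h := ((((h1.cos.pow (2 * k + 2)).mul h1.sin).const_mul (-(π/2) * (2 * k + 3))).mul h2.cos).add
      (((h1.cos.pow (2 * k + 3)).const_mul z).mul h2.sin)
    refine h.congr_deriv ?_
    have hs : Real.sin (π / 2 * x) ^ 2 = 1 - Real.cos (π / 2 * x) ^ 2 := by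
      rw [← Real.sin_sq_add_cos_sq (π / 2 * x)]; ring
    simp only [show 2 * k + 3 - 1 = 2 * k + 2 by omega, 
      show 2 * k + 2 - 1 = 2 * k + 1 by omega, Pi.mul_apply, Pi.pow_apply]
    push_cast
    have e1 : Real.cos (π / 2 * x) ^ (2 * (k+1) + 1) = 
      Real.cos (π / 2 * x) ^ (2 * k + 1) * Real.cos (π / 2 * x) ^ 2 := by ring
    have e2 : Real.cos (π / 2 * x) ^ (2 * k + 2) = 
      Real.cos (π / 2 * x) ^ (2 * k + 1) * Real.cos (π / 2 * x) := by ring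
    have e3 : Real.cos (π / 2 * x) ^ (2 * k + 3) = 
      Real.cos (π / 2 * x) ^ (2 * k + 1) * Real.cos (π / 2 * x) ^ 2 := by ring
    rw [e1, e2, e3]
    generalize Real.cos (π / 2 * x) ^ (2 * k + 1) = C
    linear_combination ((2 * k + 3) * (2 * k + 2) * (π/2)^2 * C * Real.cos (z * x)) * hs
  have h := intervalIntegral.integral_eq_sub_of_hasDerivAt hd
    (Continuous.intervalIntegrable (by fun_prop) _ _)
  rw [intervalIntegral.integral_add (Continuous.intervalIntegrable (by fun_prop) _ _)
    (Continuous.intervalIntegrable (by fun_prop) _ _),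
    intervalIntegral.integral_const_mul, intervalIntegral.integral_const_mul] at h
  change _ * Ik (k+1) z + _ * Ik k z = _ at h
  simp at h
  have hpi := Real.pi_pos
  have h3 : (2 * (k:ℝ) + 3) ≠ 0 := by positivity
  push_cast
  have h4 : (2 * ((k:ℝ) + 1) + 1) = 2 * k + 3 := by ring
  rw [h4]
  field_simp at h ⊢
  linear_combination (-1) * h

lemma Ik_prod (k : ℕ) : ∃ A : ℝ, 0 < A ∧ ∀ z, 
    Ik k z * ∏ j ∈ Finset.range (k+1), (1 - 4 * z ^ 2 / (π * (2 * (j : ℝ) + 1)) ^ 2) 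
      = A * Real.cos z := by
  induction k with
  | zero => 
    refine ⟨4 / π, by have := Real.pi_pos; positivity, fun z => ?_⟩
    rw [Finset.prod_range_one, Ik_zero]
  | succ k ih =>
    obtain ⟨A, hA, h⟩ := ih
    refine ⟨(2 * k + 2) / (2 * k + 3) * A, by positivity, fun z => ?_⟩
    rw [Finset.prod_range_succ, mul_assoc, ← h z]
    linear_combination (∏ j ∈ Finset.range (k+1), (1 - 4 * z ^ 2 / (π * (2 * (j : ℝ) + 1)) ^ 2)) * Ik_succ k z

def phi (n : ℕ) (x : ℝ) : ℝ := (Ik (n-1) 0)⁻¹ * Real.cos (π / 2 * min |x| 1) ^ (2 * (n-1) + 1)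

lemma phi_cont (n : ℕ) : Continuous (phi n) := by unfold phi; fun_prop

lemma phi_even (n : ℕ) (x : ℝ) : phi n (-x) = phi n x := by simp [phi]

lemma Ik_pos (k : ℕ) : 0 < Ik k 0 := by
  obtain ⟨A, hA, h⟩ := Ik_prod k
  have := h 0
  simp at this
  rw [this]; exact hA

lemma phi_nonneg (n : ℕ) (x : ℝ) : 0 ≤ phi n x := by
  refine mul_nonneg (inv_nonneg.2 (Ik_pos _).le) (pow_nonneg ?_ _)
  have hpi := Real.pi_pos
  refine Real.cos_nonneg_of_mem_Icc ⟨?_, ?_⟩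
  · have : 0 ≤ min |x| 1 := le_min (abs_nonneg _) zero_le_one
    nlinarith
  · have : min |x| 1 ≤ 1 := min_le_right _ _
    nlinarith

lemma phi_le (n : ℕ) (x : ℝ) : phi n x ≤ (Ik (n-1) 0)⁻¹ := by
  refine mul_le_of_le_one_right (inv_nonneg.2 (Ik_pos _).le) ?_
  refine (le_abs_self _).trans ?_
  rw [abs_pow]
  exact pow_le_one₀ (abs_nonneg _) (Real.abs_cos_le_one _)

lemma phi_supp (n : ℕ) (x : ℝ) (hx : 1 ≤ |x|) : phi n x = 0 := by
  simp [phi, min_eq_right hx]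

lemma phi_int (n : ℕ) : Integrable (phi n) := by
  refine (phi_cont n).integrable_of_hasCompactSupport ?_
  refine HasCompactSupport.intro (isCompact_Icc (a := (-1:ℝ)) (b := 1)) fun x hx => ?_
  refine phi_supp n x ?_
  by_contra h
  exact hx (abs_le.1 (not_le.1 h).le)

lemma phi_cos (n : ℕ) (z : ℝ) : ∫ x, phi n x * Real.cos (z * x) = Ik (n-1) z / Ik (n-1) 0 := by
  have h1 : ∫ x, phi n x * Real.cos (z * x) = ∫ x in Set.Ioc (-1:ℝ) 1, phi n x * Real.cos (z * x) := by
    symm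
    refine setIntegral_eq_integral_of_forall_compl_eq_zero fun x hx => ?_
    rw [phi_supp n x, zero_mul]
    by_contra h
    have := abs_lt.1 (not_le.1 h)
    exact hx ⟨this.1, this.2.le⟩
  rw [h1, ← intervalIntegral.integral_of_le (by norm_num)]
  unfold Ik
  rw [div_eq_inv_mul, ← intervalIntegral.integral_const_mul]
  refine intervalIntegral.integral_congr fun x hx => ?_
  rw [Set.uIcc_of_le (by norm_num)] at hx
  have : min |x| 1 = |x| := min_eq_left (abs_le.2 hx)
  simp only [phi, this, Ik]
  have : Real.cos (π / 2 * |x|) = Real.cos (π / 2 * x) := by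
    rcases abs_choice x with h | h <;> rw [h]
    rw [mul_neg, Real.cos_neg]
  rw [this]
  ring

lemma phi_one (n : ℕ) : ∫ x, phi n x = 1 := by
  have := phi_cos n 0
  simpa [div_self (Ik_pos (n-1)).ne'] using this

lemma zeta_eq (n : ℕ) (hn : 1 ≤ n) (zeta : ℝ → ℝ) (hzc : Continuous zeta)
    (hzeq : ∀ z : ℝ, (∀ k ∈ Finset.range n, 4 * z ^ 2 ≠ (π * (2 * (k : ℝ) + 1)) ^ 2) →
      zeta z = Real.cos z /
        ∏ k ∈ Finset.range n, (1 - 4 * z ^ 2 / (π * (2 * (k : ℝ) + 1)) ^ 2)) (z : ℝ) :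
    zeta z = Ik (n-1) z / Ik (n-1) 0 := by
  obtain ⟨k, rfl⟩ : ∃ k, n = k + 1 := ⟨n - 1, by omega⟩
  simp only [Nat.add_sub_cancel]
  obtain ⟨A, hA, h⟩ := Ik_prod k
  have hA' : Ik k 0 = A := by simpa using h 0
  have hpi := Real.pi_pos
  have hc : Continuous (fun z => Ik k z / Ik k 0) := by
    refine Continuous.div_const ?_ _
    unfold Ik
    exact intervalIntegral.continuous_parametric_intervalIntegral_of_continuous' (by fun_prop) _ _
  have hfin : {z : ℝ | ∃ j ∈ Finset.range (k+1), 4 * z ^ 2 = (π * (2 * (j : ℝ) + 1)) ^ 2}.Finite := by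
    have : {z : ℝ | ∃ j ∈ Finset.range (k+1), 4 * z ^ 2 = (π * (2 * (j : ℝ) + 1)) ^ 2} ⊆
      ⋃ j ∈ Finset.range (k+1), {π * (2 * (j : ℝ) + 1) / 2, -(π * (2 * (j : ℝ) + 1) / 2)} := by
      rintro z ⟨j, hj, hz⟩
      simp only [Set.mem_iUnion]
      refine ⟨j, hj, ?_⟩
      have : (2 * z) ^ 2 = (π * (2 * (j : ℝ) + 1)) ^ 2 := by rw [← hz]; ring
      rcases sq_eq_sq_iff_eq_or_eq_neg.1 this with h | h
      · left; linarith
      · right; simp only [Set.mem_singleton_iff]; linarith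
    refine Set.Finite.subset ?_ this
    exact Set.Finite.biUnion (Finset.finite_toSet _) fun j _ => Set.toFinite _
  have hdense := hfin.countable.dense_compl ℝ
  refine congrFun (hzc.ext_on hdense hc fun z hz => ?_) z
  have hz' : ∀ j ∈ Finset.range (k+1), 4 * z ^ 2 ≠ (π * (2 * (j : ℝ) + 1)) ^ 2 := by
    intro j hj h
    exact hz ⟨j, hj, h⟩
  rw [hzeq z hz', hA']
  have hne : ∏ j ∈ Finset.range (k+1), (1 - 4 * z ^ 2 / (π * (2 * (j : ℝ) + 1)) ^ 2) ≠ 0 := by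
    refine Finset.prod_ne_zero_iff.2 fun j hj h => hz' j hj ?_
    have : (π * (2 * (j : ℝ) + 1)) ^ 2 ≠ 0 := by positivity
    field_simp at h
    linarith
  rw [div_eq_div_iff hne hA.ne']
  linarith [h z]

lemma zeta_bound (n : ℕ) (hn : 1 ≤ n) (zeta : ℝ → ℝ) (hzc : Continuous zeta)
    (hzeq : ∀ z : ℝ, (∀ k ∈ Finset.range n, 4 * z ^ 2 ≠ (π * (2 * (k : ℝ) + 1)) ^ 2) →
      zeta z = Real.cos z /
        ∏ k ∈ Finset.range n, (1 - 4 * z ^ 2 / (π * (2 * (k : ℝ) + 1)) ^ 2)) :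
    ∃ C : ℝ, ∀ z, |zeta z| * (1 + z ^ 2) ^ n ≤ C := by
  have hpi := Real.pi_gt_three
  set N : ℝ := 2 * n * π with hN
  have hn1 : (1:ℝ) ≤ n := by exact_mod_cast hn
  have hN1 : 1 ≤ N := by nlinarith
  have hcont : Continuous (fun z => |zeta z| * (1 + z ^ 2) ^ n) := by fun_prop
  obtain ⟨C, hC⟩ := (isCompact_Icc (a := -N) (b := N)).exists_bound_of_continuousOn hcont.continuousOn
  refine ⟨max C ((N ^ 2) ^ n), fun z => ?_⟩
  by_cases hz : z ∈ Set.Icc (-N) N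
  · exact ((le_abs_self _).trans (hC z hz)).trans (le_max_left _ _)
  · refine le_trans ?_ (le_max_right _ _)
    have hz2 : N ^ 2 < z ^ 2 := by
      rw [sq_lt_sq, abs_of_pos (by linarith : 0 < N)]
      by_contra h
      exact hz (abs_le.1 (not_lt.1 h))
    have key : ∀ k ∈ Finset.range n, 
        (1 + z ^ 2) / N ^ 2 ≤ |1 - 4 * z ^ 2 / (π * (2 * (k : ℝ) + 1)) ^ 2| ∧ 
        4 * z ^ 2 ≠ (π * (2 * (k : ℝ) + 1)) ^ 2 := by
      intro k hk
      have hk1 : (k:ℝ) + 1 ≤ n := by exact_mod_cast Finset.mem_range.1 hk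
      set d := π * (2 * (k : ℝ) + 1) with hd
      have hd0 : 0 < d := by positivity
      have hdN : d ≤ N := by rw [hd, hN]; nlinarith
      have hd2 : d ^ 2 ≤ N ^ 2 := by gcongr
      have hd02 : 0 < d ^ 2 := by positivity
      constructor
      · rw [abs_sub_comm]
        refine le_trans ?_ (le_abs_self _)
        rw [le_sub_iff_add_le, div_add_one (by positivity), div_le_div_iff₀ (by positivity) hd02]
        have hN2 : 1 ≤ N ^ 2 := one_le_pow₀ hN1
        have : 1 + z ^ 2 + N ^ 2 ≤ 4 * z ^ 2 := by linarith
        calc (1 + z ^ 2 + N ^ 2) * d ^ 2 ≤ 4 * z ^ 2 * d ^ 2 := by gcongr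
          _ ≤ 4 * z ^ 2 * N ^ 2 := by gcongr
      · nlinarith
    rw [hzeq z fun k hk => (key k hk).2, abs_div, Finset.abs_prod]
    have h1 : ((1 + z ^ 2) / N ^ 2) ^ n ≤ ∏ k ∈ Finset.range n, |1 - 4 * z ^ 2 / (π * (2 * (k : ℝ) + 1)) ^ 2| := by
      calc ((1 + z ^ 2) / N ^ 2) ^ n = ∏ k ∈ Finset.range n, ((1 + z ^ 2) / N ^ 2) := by
            rw [Finset.prod_const, Finset.card_range]
        _ ≤ _ := Finset.prod_le_prod (fun _ _ => by positivity) fun k hk => (key k hk).1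
    have h0 : 0 < ((1 + z ^ 2) / N ^ 2) ^ n := by positivity
    calc |Real.cos z| / (∏ k ∈ Finset.range n, |1 - 4 * z ^ 2 / (π * (2 * (k : ℝ) + 1)) ^ 2|) * (1 + z ^ 2) ^ n
        ≤ 1 / ((1 + z ^ 2) / N ^ 2) ^ n * (1 + z ^ 2) ^ n := by
          gcongr
          exact Real.abs_cos_le_one z
      _ = (N ^ 2) ^ n := by
          rw [div_pow]; field_simp

lemma zeta_int (n : ℕ) (hn : 1 ≤ n) (zeta : ℝ → ℝ) (hzc : Continuous zeta)
    (C : ℝ) (hC : ∀ z, |zeta z| * (1 + z ^ 2) ^ n ≤ C) (ε : ℝ) (hε : 0 < ε) (c : ℂ) (k : ℕ) (hk : k < n) :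
    Integrable (fun t : ℝ => (Complex.I * (t : ℂ) + c) ^ k * (zeta (ε * t) : ℂ)) := by
  set M : ℝ := 1 + ‖c‖ + ε⁻¹ ^ 2 with hM
  have hM1 : 1 ≤ M := by have := norm_nonneg c; have : 0 ≤ ε⁻¹ ^ 2 := by positivity
                         linarith
  have hi : Integrable (fun t : ℝ => C * M ^ (n-1) * (1 + (ε * t) ^ 2)⁻¹) :=
    ((integrable_inv_one_add_sq.comp_mul_left' hε.ne')).const_mul _
  refine hi.mono' (by fun_prop) (Eventually.of_forall fun t => ?_)
  rw [norm_mul, norm_pow, Complex.norm_real, Real.norm_eq_abs]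
  set u := 1 + (ε * t) ^ 2 with hu
  have hu1 : 1 ≤ u := by rw [hu]; nlinarith [sq_nonneg (ε * t)]
  have h1 : ‖Complex.I * (t : ℂ) + c‖ ≤ M * u := by
    refine (norm_add_le _ _).trans ?_
    rw [norm_mul, Complex.norm_I, one_mul, Complex.norm_real, Real.norm_eq_abs]
    have h2 : |t| ≤ 1 + t ^ 2 := by
      rw [← sq_abs]; nlinarith [sq_nonneg (|t| - 1), abs_nonneg t]
    have h3 : t ^ 2 = ε⁻¹ ^ 2 * (ε * t) ^ 2 := by field_simp
    have h4 : 0 ≤ ε⁻¹ ^ 2 := by positivity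
    have h5 := norm_nonneg c
    have h6 : 0 ≤ (ε * t) ^ 2 := by positivity
    rw [hM, hu]
    nlinarith [mul_nonneg h5 h6]
  have h2 : ‖Complex.I * (t : ℂ) + c‖ ^ k ≤ (M * u) ^ (n-1) :=
    (pow_le_pow_left₀ (norm_nonneg _) h1 k).trans
      (pow_le_pow_right₀ (by nlinarith) (by omega))
  have h3 := hC (ε * t)
  rw [← hu] at h3
  have hu0 : 0 < u := by linarith
  calc _ ≤ (M * u) ^ (n-1) * |zeta (ε * t)| := by gcongr
    _ = M ^ (n-1) * u⁻¹ * (|zeta (ε * t)| * u ^ n) := by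
        obtain ⟨m, rfl⟩ : ∃ m, n = m + 1 := ⟨n - 1, by omega⟩
        simp only [Nat.add_sub_cancel]
        rw [mul_pow, pow_succ u]; field_simp
    _ ≤ M ^ (n-1) * u⁻¹ * C := by gcongr
    _ = _ := by ring

open FourierTransform in
lemma zeta_fourier (n : ℕ) (zeta : ℝ → ℝ)
    (hz : ∀ z, zeta z = ∫ x, phi n x * Real.cos (z * x)) (hzi : Integrable zeta)
    (ε : ℝ) (hε : 0 < ε) (y : ℝ) :
    ∫ t : ℝ, (zeta (ε * t) : ℂ) * Complex.exp (Complex.I * t * y) =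
      2 * π * ((ε⁻¹ * phi n (y / ε) : ℝ) : ℂ) := by
  have hpi := Real.pi_pos
  set f : ℝ → ℂ := fun x => (phi n x : ℂ) with hf
  have hfc : Continuous f := by have := phi_cont n; fun_prop
  have hfi : Integrable f := (phi_int n).ofReal
  have hF : ∀ w, 𝓕 f w = (zeta (2 * π * w) : ℂ) := by
    intro w
    rw [Real.fourier_real_eq_integral_exp_smul]
    have hb : ∀ s : ℝ, Integrable (fun v : ℝ => Complex.exp ((s * v : ℝ) * Complex.I) * (phi n v : ℂ)) := by
      intro s
      refine hfi.bdd_mul (c := 1) (by fun_prop) (Eventually.of_forall fun v => ?_)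
      rw [Complex.norm_exp_ofReal_mul_I]
    have e1 : (∫ v : ℝ, Complex.exp (((-(2 * π * w)) * v : ℝ) * Complex.I) * (phi n v : ℂ)) = 
        ∫ v : ℝ, Complex.exp (((2 * π * w) * v : ℝ) * Complex.I) * (phi n v : ℂ) := by
      rw [← integral_neg_eq_self]
      refine integral_congr_ae (Eventually.of_forall fun v => ?_)
      simp [phi_even]
    have e2 : (∫ v : ℝ, Complex.exp (((-(2 * π * w)) * v : ℝ) * Complex.I) * (phi n v : ℂ)) +
        (∫ v : ℝ, Complex.exp (((2 * π * w) * v : ℝ) * Complex.I) * (phi n v : ℂ)) = 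
        2 * (zeta (2 * π * w) : ℂ) := by
      rw [← integral_add (hb _) (hb _), hz, ← integral_complex_ofReal, ← integral_const_mul]
      refine integral_congr_ae (Eventually.of_forall fun v => ?_)
      simp only [Complex.ofReal_mul, Complex.ofReal_cos, Complex.cos]
      push_cast
      ring_nf
    have e3 : (∫ v : ℝ, Complex.exp (((-2 * π * v * w : ℝ) : ℂ) * Complex.I) • f v) = 
       ∫ v : ℝ, Complex.exp (((-(2 * π * w)) * v : ℝ) * Complex.I) * (phi n v : ℂ) := by
      refine integral_congr_ae (Eventually.of_forall fun v => ?_)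
      simp only [hf, smul_eq_mul]
      congr 4; ring
    rw [← e1] at e2
    rw [e3]
    linear_combination e2 / 2
  have hFi : Integrable (𝓕 f) := by
    have : 𝓕 f = fun w => (zeta (2 * π * w) : ℂ) := funext hF
    rw [this]
    exact (hzi.comp_mul_left' (by positivity : (2 * π) ≠ 0)).ofReal
  have hinv := congrFun (hfc.fourierInv_fourier_eq hfi hFi) (y / ε)
  rw [Real.fourierInv_eq'] at hinv
  simp only [hF] at hinv
  have hs := Measure.integral_comp_mul_left (fun t : ℝ => (zeta (ε * t) : ℂ) * Complex.exp (Complex.I * t * y)) (2 * π / ε)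
  have h5 : (∫ t : ℝ, (zeta (ε * (2 * π / ε * t)) : ℂ) * Complex.exp (Complex.I * ((2 * π / ε * t : ℝ) : ℂ) * y))
     = (phi n (y / ε) : ℂ) := by
    change _ = f (y / ε)
    rw [← hinv]
    refine integral_congr_ae (Eventually.of_forall fun v => ?_)
    have h6 : ε * (2 * π / ε * v) = 2 * π * v := by field_simp
    simp only [h6, smul_eq_mul]
    rw [mul_comm]
    congr 2
    have : (ε : ℂ) ≠ 0 := by exact_mod_cast hε.ne'
    simp
    field_simp
  rw [h5, abs_of_pos (by positivity)] at hs
  rw [Complex.ofReal_mul, hs, Complex.real_smul]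
  push_cast
  have : (ε : ℂ) ≠ 0 := by exact_mod_cast hε.ne'
  have : (π : ℂ) ≠ 0 := by exact_mod_cast hpi.ne'
  generalize (∫ t : ℝ, (zeta (ε * t) : ℂ) * Complex.exp (Complex.I * t * y)) = J
  field_simp

lemma approx_id {n : ℕ} (f : (Fin n → ℝ) → ℝ) (hf : Integrable f) (a : Fin n → ℝ)
    (hL : Tendsto (fun δ : ℝ => ⨍ y in Metric.closedBall a δ, ‖f y - f a‖) (𝓝[>] 0) (𝓝 0))
    (h : (Fin n → ℝ) → ℝ) (hm : Measurable h) (hc : ContinuousAt h a)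
    (k : ℝ → (Fin n → ℝ) → ℝ) (R M : ℝ) (hR : 0 < R) (hM : 0 ≤ M)
    (hkm : ∀ ε, 0 < ε → ε ≤ 1 → Measurable (k ε))
    (hk0 : ∀ ε, 0 < ε → ε ≤ 1 → ∀ y, 0 ≤ k ε y)
    (hks : ∀ ε, 0 < ε → ε ≤ 1 → ∀ y, k ε y ≠ 0 → y ∈ Metric.closedBall a (R * ε))
    (hkM : ∀ ε, 0 < ε → ε ≤ 1 → ∀ y, k ε y ≤ M * (ε ^ n)⁻¹)
    (hk1 : ∀ ε, 0 < ε → ε ≤ 1 → ∫ y, k ε y = 1) :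
    (∀ᶠ ε in 𝓝[>] (0:ℝ), Integrable (fun y => f y * h y * k ε y)) ∧
    Tendsto (fun ε => ∫ y, f y * h y * k ε y) (𝓝[>] 0) (𝓝 (f a * h a)) := by
  have hlt : ∀ᶠ ε in 𝓝[>] (0:ℝ), 0 < ε ∧ ε ≤ 1 := by
    filter_upwards [Ioc_mem_nhdsGT (zero_lt_one (α := ℝ))] with ε hε using hε
  -- closeness of h
  have hclose : ∀ η > 0, ∀ᶠ ε in 𝓝[>] (0:ℝ), ∀ y ∈ Metric.closedBall a (R * ε), |h y - h a| < η := by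
    intro η hη
    obtain ⟨r, hr, hr'⟩ := Metric.continuousAt_iff.1 hc η hη
    have : Set.Ioo (0:ℝ) (r / R) ∈ 𝓝[>] (0:ℝ) := Ioo_mem_nhdsGT (by positivity)
    filter_upwards [this] with ε hε y hy
    refine hr' ?_
    have h1 : dist y a ≤ R * ε := hy
    have h2 : R * ε < r := by
      have := (lt_div_iff₀ hR).1 hε.2
      linarith
    linarith
  set B := |h a| + 1 with hB
  have hkint : ∀ ε, 0 < ε → ε ≤ 1 → Integrable (k ε) := by
    intro ε h0 h1
    by_contra hcon
    have := hk1 ε h0 h1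
    rw [integral_undef hcon] at this
    norm_num at this
  have hhk : ∀ᶠ ε in 𝓝[>] (0:ℝ), ∀ y, |h y * k ε y| ≤ B * (M * (ε ^ n)⁻¹) := by
    filter_upwards [hlt, hclose 1 one_pos] with ε ⟨h0, h1⟩ h2 y
    by_cases hy : k ε y = 0
    · rw [hy, mul_zero, abs_zero]; positivity
    · have h3 := h2 y (hks ε h0 h1 y hy)
      rw [abs_mul, abs_of_nonneg (hk0 ε h0 h1 y)]
      have h4 : |h y| ≤ B := by
        have := abs_sub_abs_le_abs_sub (h y) (h a)
        linarith
      exact mul_le_mul h4 (hkM ε h0 h1 y) (hk0 ε h0 h1 y) (by positivity)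
  have hint : ∀ᶠ ε in 𝓝[>] (0:ℝ), Integrable (fun y => f y * h y * k ε y) := by
    filter_upwards [hlt, hhk] with ε ⟨h0, h1⟩ h2
    have : Integrable (fun y => f y * (h y * k ε y)) :=
      hf.mul_bdd (c := B * (M * (ε ^ n)⁻¹)) (hm.mul (hkm ε h0 h1)).aestronglyMeasurable
        (Eventually.of_forall fun y => h2 y)
    simpa only [mul_assoc] using this
  refine ⟨hint, ?_⟩
  rw [Metric.tendsto_nhds]
  intro δ hδ
  set η := δ / (2 * (|f a| + 1)) with hη
  have hη0 : 0 < η := by positivity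
  have hL' : Tendsto (fun ε : ℝ => B * M * (2 * R) ^ n * 
      ⨍ y in Metric.closedBall a (R * ε), ‖f y - f a‖) (𝓝[>] 0) (𝓝 0) := by
    have : Tendsto (fun ε : ℝ => R * ε) (𝓝[>] 0) (𝓝[>] 0) := by
      refine tendsto_nhdsWithin_iff.2 ⟨?_, ?_⟩
      · have : Tendsto (fun ε : ℝ => R * ε) (𝓝 0) (𝓝 (R * 0)) := (continuous_const_mul R).tendsto 0
        rw [mul_zero] at this
        exact this.mono_left nhdsWithin_le_nhds
      · filter_upwards [self_mem_nhdsWithin] with ε hε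
        exact mul_pos hR hε
    simpa using (hL.comp this).const_mul (B * M * (2 * R) ^ n)
  have hL'' := (Metric.tendsto_nhds.1 hL') (δ/2) (by positivity)
  filter_upwards [hlt, hint, hclose 1 one_pos, hclose η hη0, hL''] with ε ⟨h0, h1⟩ hi hc1 hcη hav
  have hki := hkint ε h0 h1
  rw [Real.dist_eq] at hav ⊢
  have e1 : (∫ y, f y * h y * k ε y) - f a * h a = ∫ y, (f y * h y - f a * h a) * k ε y := by
    have : f a * h a = ∫ y, f a * h a * k ε y := by
      rw [integral_const_mul, hk1 ε h0 h1, mul_one]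
    rw [this, ← integral_sub hi (hki.const_mul _), ← this]
    refine integral_congr_ae (Eventually.of_forall fun y => ?_)
    simp only; ring
  have hball : MeasurableSet (Metric.closedBall a (R * ε)) := Metric.isClosed_closedBall.measurableSet
  have hfin : volume (Metric.closedBall a (R * ε)) < ⊤ := measure_closedBall_lt_top
  have hfi : IntegrableOn (fun y => ‖f y - f a‖) (Metric.closedBall a (R * ε)) :=
    (hf.integrableOn.sub (integrableOn_const hfin.ne)).norm
  have e2 : |∫ y, (f y * h y - f a * h a) * k ε y| ≤ 
      ∫ y, ((B * (M * (ε ^ n)⁻¹)) * (Metric.closedBall a (R * ε)).indicator (fun y => ‖f y - f a‖) y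
        + |f a| * η * k ε y) := by
    rw [← Real.norm_eq_abs]
    refine norm_integral_le_of_norm_le (((hfi.integrable_indicator hball).const_mul _).add 
      (hki.const_mul _)) (Eventually.of_forall fun y => ?_)
    by_cases hy : k ε y = 0
    · rw [hy, mul_zero, mul_zero, norm_zero, add_zero]
      refine mul_nonneg (by positivity) (Set.indicator_nonneg (fun _ _ => norm_nonneg _) _)
    · have hyb := hks ε h0 h1 y hy
      rw [Set.indicator_of_mem hyb, norm_mul, Real.norm_eq_abs (k ε y), abs_of_nonneg (hk0 ε h0 h1 y)]
      have h4 : |h y| ≤ B := by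
        have := abs_sub_abs_le_abs_sub (h y) (h a)
        have := hc1 y hyb
        linarith
      have h5 : ‖f y * h y - f a * h a‖ ≤ B * ‖f y - f a‖ + |f a| * η := by
        have : f y * h y - f a * h a = h y * (f y - f a) + f a * (h y - h a) := by ring
        rw [this]
        refine (norm_add_le _ _).trans ?_
        rw [norm_mul, norm_mul]
        exact add_le_add (mul_le_mul_of_nonneg_right h4 (norm_nonneg _))
          (mul_le_mul_of_nonneg_left (hcη y hyb).le (norm_nonneg _))
      have hk0' := hk0 ε h0 h1 y
      calc _ ≤ (B * ‖f y - f a‖ + |f a| * η) * k ε y := by gcongr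
        _ = B * ‖f y - f a‖ * k ε y + |f a| * η * k ε y := by ring
        _ ≤ B * ‖f y - f a‖ * (M * (ε ^ n)⁻¹) + |f a| * η * k ε y := by
            gcongr
            exact hkM ε h0 h1 y
        _ = _ := by ring
  rw [integral_add ((hfi.integrable_indicator hball).const_mul _) (hki.const_mul _),
    integral_const_mul, integral_const_mul, hk1 ε h0 h1, integral_indicator hball] at e2
  have e3 : ∫ y in Metric.closedBall a (R * ε), ‖f y - f a‖ = 
      (2 * (R * ε)) ^ n * ⨍ y in Metric.closedBall a (R * ε), ‖f y - f a‖ := by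
    have hv : (volume (Metric.closedBall a (R * ε))).toReal = (2 * (R * ε)) ^ n := by
      rw [Real.volume_pi_closedBall a (by positivity), ENNReal.toReal_ofReal (by positivity)]
      simp
    rw [setAverage_eq, measureReal_def, hv, smul_eq_mul, ← mul_assoc, mul_inv_cancel₀ (by positivity), one_mul]
  rw [e1]
  rw [e3] at e2
  have e4 : B * (M * (ε ^ n)⁻¹) * ((2 * (R * ε)) ^ n * ⨍ y in Metric.closedBall a (R * ε), ‖f y - f a‖)
     = B * M * (2 * R) ^ n * ⨍ y in Metric.closedBall a (R * ε), ‖f y - f a‖ := by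
    have : (2 * (R * ε)) ^ n = (2 * R) ^ n * ε ^ n := by rw [← mul_pow]; ring
    rw [this]; field_simp
  rw [e4] at e2
  have e5 : |f a| * η < δ / 2 := by
    rw [hη]
    have : |f a| * (δ / (2 * (|f a| + 1))) = (δ / 2) * (|f a| / (|f a| + 1)) := by field_simp
    rw [this]
    refine mul_lt_of_lt_one_right (by positivity) ?_
    rw [div_lt_one (by positivity)]; linarith
  rw [sub_zero] at hav
  have e6 := (le_abs_self _).trans_lt hav
  linarith

def kap (n : ℕ) (ε a y : ℝ) : ℝ :=
  if 0 < y then ε⁻¹ * phi n ((Real.log y - Real.log a) / ε) / y else 0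

lemma kap_meas (n : ℕ) (ε a : ℝ) : Measurable (kap n ε a) := by
  unfold kap
  refine Measurable.ite measurableSet_Ioi ?_ measurable_const
  have := (phi_cont n).measurable
  fun_prop

lemma kap_nonneg (n : ℕ) (ε a y : ℝ) (hε : 0 < ε) : 0 ≤ kap n ε a y := by
  unfold kap
  split_ifs with h
  · have := phi_nonneg n ((Real.log y - Real.log a) / ε)
    positivity
  · exact le_rfl

lemma kap_supp (n : ℕ) (ε a y : ℝ) (ha : 0 < a) (hε : 0 < ε) (h : kap n ε a y ≠ 0) :
    0 < y ∧ |Real.log y - Real.log a| ≤ ε := by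
  unfold kap at h
  split_ifs at h with hy
  · refine ⟨hy, ?_⟩
    by_contra hc
    refine h ?_
    rw [phi_supp]
    · simp
    · rw [abs_div, abs_of_pos hε, le_div_iff₀ hε, one_mul]
      exact (not_le.1 hc).le
  · exact absurd rfl h

lemma kap_supp' (n : ℕ) (ε a y : ℝ) (ha : 0 < a) (hε : 0 < ε) (hε1 : ε ≤ 1) (h : kap n ε a y ≠ 0) :
    |y - a| ≤ 2 * a * ε := by
  obtain ⟨hy, h1⟩ := kap_supp n ε a y ha hε h
  have h2 : y = a * Real.exp (Real.log y - Real.log a) := by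
    rw [Real.exp_sub, Real.exp_log hy, Real.exp_log ha]; field_simp
  have h3 : y - a = a * (Real.exp (Real.log y - Real.log a) - 1) := by
    rw [mul_sub, ← h2, mul_one]
  rw [h3, abs_mul, abs_of_pos ha]
  have := Real.abs_exp_sub_one_le (h1.trans hε1)
  nlinarith

lemma kap_le (n : ℕ) (ε a y : ℝ) (ha : 0 < a) (hε : 0 < ε) (hε1 : ε ≤ 1) :
    kap n ε a y ≤ (Ik (n-1) 0)⁻¹ * Real.exp 1 / a * ε⁻¹ := by
  have hI := Ik_pos (n-1)
  by_cases h : kap n ε a y = 0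
  · rw [h]; positivity
  obtain ⟨hy, h1⟩ := kap_supp n ε a y ha hε h
  have h2 : a ≤ y * Real.exp 1 := by
    rw [← Real.log_le_log_iff ha (by positivity), Real.log_mul hy.ne' (Real.exp_pos _).ne', Real.log_exp]
    have := (abs_le.1 h1).1
    linarith
  unfold kap
  rw [if_pos hy, div_le_iff₀ hy]
  have h3 := phi_le n ((Real.log y - Real.log a) / ε)
  calc ε⁻¹ * phi n ((Real.log y - Real.log a) / ε) ≤ ε⁻¹ * (Ik (n-1) 0)⁻¹ := by gcongr
    _ = (Ik (n-1) 0)⁻¹ / a * ε⁻¹ * a := by field_simp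
    _ ≤ (Ik (n-1) 0)⁻¹ / a * ε⁻¹ * (y * Real.exp 1) := by gcongr
    _ = _ := by ring

lemma kap_int (n : ℕ) (ε a : ℝ) (hε : 0 < ε) : ∫ y, kap n ε a y = 1 := by
  have h1 : ∫ y, kap n ε a y = ∫ y in Set.Ioi (0:ℝ), kap n ε a y := by
    symm
    refine setIntegral_eq_integral_of_forall_compl_eq_zero fun y hy => ?_
    exact if_neg hy
  have h2 : Set.Ioi (0:ℝ) = Real.exp '' Set.univ := by rw [Set.image_univ, Real.range_exp]
  rw [h1, h2, integral_image_eq_integral_abs_deriv_smul (f' := Real.exp) MeasurableSet.univ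
    (fun x _ => (Real.hasDerivAt_exp x).hasDerivWithinAt) Real.exp_injective.injOn]
  rw [Measure.restrict_univ]
  have h3 : ∀ x, |Real.exp x| • kap n ε a (Real.exp x) = ε⁻¹ * phi n ((x - Real.log a) / ε) := by
    intro x
    rw [kap, if_pos (Real.exp_pos x), abs_of_pos (Real.exp_pos x), Real.log_exp, smul_eq_mul]
    have := Real.exp_pos x
    field_simp
  simp only [h3]
  rw [integral_const_mul, integral_sub_right_eq_self (fun x => phi n (x / ε)), 
    Measure.integral_comp_div (fun x => phi n x), phi_one, abs_of_pos hε, smul_eq_mul, mul_one, inv_mul_cancel₀ hε.ne']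

def KK (n : ℕ) (a : Fin n → ℝ) (ε : ℝ) (y : Fin n → ℝ) : ℝ := ∏ c, kap n ε (a c) (y c)

lemma approx_main {n : ℕ} (f : (Fin n → ℝ) → ℝ) (hf : Integrable f) (a : Fin n → ℝ)
    (ha : ∀ i, 0 < a i)
    (hL : Tendsto (fun δ : ℝ => ⨍ y in Metric.closedBall a δ, ‖f y - f a‖) (𝓝[>] 0) (𝓝 0))
    (h : (Fin n → ℝ) → ℝ) (hm : Measurable h) (hc : ContinuousAt h a) :
    (∀ᶠ ε in 𝓝[>] (0:ℝ), Integrable (fun y => f y * h y * KK n a ε y)) ∧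
    Tendsto (fun ε => ∫ y, f y * h y * KK n a ε y) (𝓝[>] 0) (𝓝 (f a * h a)) := by
  have hI := Ik_pos (n-1)
  refine approx_id f hf a hL h hm hc (KK n a) (2 * (‖a‖ + 1)) 
    (∏ c, (Ik (n-1) 0)⁻¹ * Real.exp 1 / a c) (by positivity) 
    (Finset.prod_nonneg fun c _ => by have := ha c; positivity) ?_ ?_ ?_ ?_ ?_
  · intro ε h0 h1
    exact Finset.measurable_fun_prod _ fun c _ => (kap_meas n ε (a c)).comp (measurable_pi_apply c)
  · intro ε h0 h1 y
    exact Finset.prod_nonneg fun c _ => kap_nonneg n ε _ _ h0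
  · intro ε h0 h1 y hy
    rw [mem_closedBall_iff_norm, pi_norm_le_iff_of_nonneg (by positivity)]
    intro c
    have := kap_supp' n ε (a c) (y c) (ha c) h0 h1 (Finset.prod_ne_zero_iff.1 hy c (Finset.mem_univ c))
    have h2 : a c ≤ ‖a‖ := (le_abs_self _).trans (norm_le_pi_norm a c)
    refine this.trans ?_
    gcongr
    linarith
  · intro ε h0 h1 y
    have : (∏ c, (Ik (n-1) 0)⁻¹ * Real.exp 1 / a c) * (ε ^ n)⁻¹ = 
      ∏ c, ((Ik (n-1) 0)⁻¹ * Real.exp 1 / a c * ε⁻¹) := by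
      rw [Finset.prod_mul_distrib (f := fun c => (Ik (n-1) 0)⁻¹ * Real.exp 1 / a c)]; simp
    rw [this]
    exact Finset.prod_le_prod (fun c _ => kap_nonneg n ε _ _ h0) 
      fun c _ => kap_le n ε _ _ (ha c) h0 h1
  · intro ε h0 h1
    unfold KK
    rw [integral_fintype_prod_volume_eq_prod (fun c => kap n ε (a c))]
    simp [kap_int n ε _ h0]

def Edet (n : ℕ) (t a : Fin n → ℝ) : ℂ :=
  (Matrix.of fun b c : Fin n =>
    Complex.exp ((-(Complex.I * (t b : ℂ)) - (ex n b : ℂ) - 1) * (Real.log (a c) : ℂ))).det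

lemma sigC_vdm_ne (n : ℕ) (t : Fin n → ℝ) : vdm (sigC n t) ≠ 0 := by
  refine vdm_ne_zero _ fun i j hij => ?_
  have := congrArg Complex.re hij
  simp [sigC] at this
  exact Fin.ext (by exact_mod_cast this)

lemma integrand_eq (n : ℕ) (p : (Fin n → ℝ) → ℝ) (t a : Fin n → ℝ) (ha : ∀ j, 0 < a j) :
    ((p a * (∏ j, a j) ^ (-(2 * (n : ℝ) - 1)) : ℝ) : ℂ) *
        (Matrix.of fun b c : Fin n => cpw (a c) (sigC n t b + (n : ℂ) - 1)).det /
          (((vdm fun j => (a j) ^ 2 : ℝ) : ℂ) * vdm (sigC n t)) =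
    (vdm (sigC n t))⁻¹ * (((p a / (vdm fun j => (a j) ^ 2) : ℝ) : ℂ) * Ddet n t a) := by
  have h1 : Ddet n t a = (((∏ j, a j) ^ (-(2 * (n : ℝ) - 1)) : ℝ) : ℂ) *
      (Matrix.of fun b c : Fin n => cpw (a c) (sigC n t b + (n : ℂ) - 1)).det := by
    rw [← Real.finset_prod_rpow _ _ (fun i _ => (ha i).le), Complex.ofReal_prod, ← Matrix.det_mul_row]
    unfold Ddet
    congr 1
    ext b c
    simp only [Matrix.of_apply, cpw, if_neg (ha c).ne']
    rw [Real.rpow_def_of_pos (ha c), Complex.ofReal_exp, ← Complex.exp_add]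
    congr 1
    simp only [ex, sigC]
    push_cast
    ring
  rw [h1]
  push_cast
  rw [div_eq_mul_inv, mul_inv]
  ring

def posS (n : ℕ) : Set (Fin n → ℝ) := {a : Fin n → ℝ | ∀ j, 0 < a j}

lemma posS_meas (n : ℕ) : MeasurableSet (posS n) := by
  have : posS n = Set.univ.pi fun _ => Set.Ioi 0 := by
    ext a; simp [posS]
  rw [this]
  exact MeasurableSet.univ_pi fun _ => measurableSet_Ioi

lemma ShatP_eq (n : ℕ) (p : (Fin n → ℝ) → ℝ) (t : Fin n → ℝ) :
    ShatP n p t * vdm (sigC n t) = ((∏ j ∈ Finset.range n, 2 ^ j * Nat.factorial j : ℕ) : ℂ) *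
      ∫ a in posS n, ((p a / (vdm fun j => (a j) ^ 2) : ℝ) : ℂ) * Ddet n t a := by
  have h : (∫ a in {a : Fin n → ℝ | ∀ j, 0 < a j},
      ((p a * (∏ j, a j) ^ (-(2 * (n : ℝ) - 1)) : ℝ) : ℂ) *
        (Matrix.of fun b c : Fin n => cpw (a c) (sigC n t b + (n : ℂ) - 1)).det /
          (((vdm fun j => (a j) ^ 2 : ℝ) : ℂ) * vdm (sigC n t))) =
      (vdm (sigC n t))⁻¹ * ∫ a in posS n, ((p a / (vdm fun j => (a j) ^ 2) : ℝ) : ℂ) * Ddet n t a := by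
    rw [← integral_const_mul]
    exact setIntegral_congr_fun (posS_meas n) fun a ha => integrand_eq n p t a ha
  unfold ShatP
  rw [h]
  have := sigC_vdm_ne n t
  field_simp

def GG (n : ℕ) (a : Fin n → ℝ) (ε : ℝ) (ρ τ : Equiv.Perm (Fin n)) (y : Fin n → ℝ) : ℝ :=
  (((Equiv.Perm.sign ρ : ℤ) : ℝ) * ((Equiv.Perm.sign τ : ℤ) : ℝ)) *
    ∏ b, (kap n ε (a (τ b)) (y (ρ b)) * 
      Real.exp ((ex n b + 1) * (Real.log (y (ρ b)) - Real.log (a (τ b)))))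

lemma inner_eq (n : ℕ) (zeta : ℝ → ℝ) (hzc : Continuous zeta)
    (hz : ∀ z, zeta z = ∫ x, phi n x * Real.cos (z * x)) (hzi : Integrable zeta)
    (ε : ℝ) (hε : 0 < ε) (a y : Fin n → ℝ) (ha : ∀ j, 0 < a j) (hy : ∀ j, 0 < y j) :
    ∫ t : Fin n → ℝ, Ddet n t y * (∏ l, (zeta (ε * t l) : ℂ)) * Edet n t a =
      (((2 * π) ^ n * ∑ ρ, ∑ τ, GG n a ε ρ τ y : ℝ) : ℂ) := by
  set q : Equiv.Perm (Fin n) → Equiv.Perm (Fin n) → Fin n → ℝ → ℂ := fun ρ τ b s =>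
    Complex.exp ((Complex.I * (s : ℂ) + (ex n b : ℂ)) * (Real.log (y (ρ b)) : ℂ)) *
    (zeta (ε * s) : ℂ) * 
    Complex.exp ((-(Complex.I * (s : ℂ)) - (ex n b : ℂ) - 1) * (Real.log (a (τ b)) : ℂ)) with hq
  have hq' : ∀ ρ τ b s, q ρ τ b s = 
      (Real.exp (ex n b * Real.log (y (ρ b)) - (ex n b + 1) * Real.log (a (τ b))) : ℂ) *
      ((zeta (ε * s) : ℂ) * Complex.exp (Complex.I * s * ((Real.log (y (ρ b)) - Real.log (a (τ b)) : ℝ) : ℂ))) := by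
    intro ρ τ b s
    simp only [hq]
    rw [mul_right_comm, ← Complex.exp_add, Complex.ofReal_exp, mul_left_comm, ← Complex.exp_add, mul_comm]
    congr 2
    push_cast; ring
  have hqi : ∀ ρ τ b, Integrable (q ρ τ b) := by
    intro ρ τ b
    simp only [funext (hq' ρ τ b)]
    refine Integrable.const_mul ?_ _
    refine Integrable.mul_bdd (c := 1) (hzi.comp_mul_left' hε.ne').ofReal (by fun_prop) 
      (Eventually.of_forall fun s => ?_)
    have : Complex.I * s * ((Real.log (y (ρ b)) - Real.log (a (τ b)) : ℝ) : ℂ) = 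
      ((s * (Real.log (y (ρ b)) - Real.log (a (τ b))) : ℝ) : ℂ) * Complex.I := by push_cast; ring
    rw [this, Complex.norm_exp_ofReal_mul_I]
  have hqe : ∀ ρ τ b, ∫ s, q ρ τ b s = ((2 * π * (kap n ε (a (τ b)) (y (ρ b)) * 
      Real.exp ((ex n b + 1) * (Real.log (y (ρ b)) - Real.log (a (τ b))))) : ℝ) : ℂ) := by
    intro ρ τ b
    simp only [hq']
    rw [integral_const_mul, zeta_fourier n zeta hz hzi ε hε]
    rw [kap, if_pos (hy _)]
    have : Real.exp (ex n b * Real.log (y (ρ b)) - (ex n b + 1) * Real.log (a (τ b))) = 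
      Real.exp ((ex n b + 1) * (Real.log (y (ρ b)) - Real.log (a (τ b)))) / y (ρ b) := by
      rw [eq_div_iff (hy _).ne']
      nth_rewrite 2 [← Real.exp_log (hy (ρ b))]
      rw [← Real.exp_add]; congr 1; ring
    rw [this]
    push_cast
    ring
  have hexp : ∀ t : Fin n → ℝ, Ddet n t y * (∏ l, (zeta (ε * t l) : ℂ)) * Edet n t a = 
      ∑ ρ : Equiv.Perm (Fin n), ∑ τ : Equiv.Perm (Fin n), 
        ((((Equiv.Perm.sign ρ : ℤ) : ℂ)) * (((Equiv.Perm.sign τ : ℤ) : ℂ))) * ∏ b, q ρ τ b (t b) := by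
    intro t
    unfold Ddet Edet
    rw [← Matrix.det_transpose, ← Matrix.det_transpose (Matrix.of fun b c : Fin n =>
      Complex.exp ((-(Complex.I * (t b : ℂ)) - (ex n b : ℂ) - 1) * (Real.log (a c) : ℂ))), 
      Matrix.det_apply', Matrix.det_apply', Finset.sum_mul, Finset.sum_mul_sum]
    refine Finset.sum_congr rfl fun ρ _ => Finset.sum_congr rfl fun τ _ => ?_
    simp only [hq, Finset.prod_mul_distrib, Matrix.transpose_apply, Matrix.of_apply]
    ring
  have hpi : ∀ ρ τ, Integrable (fun t : Fin n → ℝ => 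
      ((((Equiv.Perm.sign ρ : ℤ) : ℂ)) * (((Equiv.Perm.sign τ : ℤ) : ℂ))) * ∏ b, q ρ τ b (t b)) :=
    fun ρ τ => (Integrable.fintype_prod (hqi ρ τ)).const_mul _
  simp only [hexp]
  rw [integral_finsetSum _ fun ρ _ => integrable_finsetSum _ fun τ _ => hpi ρ τ]
  rw [Finset.mul_sum, Complex.ofReal_sum]
  refine Finset.sum_congr rfl fun ρ _ => ?_
  rw [integral_finsetSum _ fun τ _ => hpi ρ τ, Finset.mul_sum, Complex.ofReal_sum]
  refine Finset.sum_congr rfl fun τ _ => ?_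
  rw [integral_const_mul, integral_fintype_prod_volume_eq_prod (fun b => q ρ τ b)]
  simp only [hqe, GG]
  rw [← Complex.ofReal_prod, Finset.prod_mul_distrib (f := fun _ => 2 * π)]
  simp only [Finset.prod_const, Finset.card_univ, Fintype.card_fin]
  push_cast
  ring

lemma vdm_zeta_int (n : ℕ) (hn : 1 ≤ n) (zeta : ℝ → ℝ) (hzc : Continuous zeta)
    (C : ℝ) (hC : ∀ z, |zeta z| * (1 + z ^ 2) ^ n ≤ C) (ε : ℝ) (hε : 0 < ε) :
    Integrable (fun t : Fin n → ℝ => vdm (sigC n t) * ∏ l, (zeta (ε * t l) : ℂ)) := by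
  have h : ∀ t : Fin n → ℝ, vdm (sigC n t) * ∏ l, (zeta (ε * t l) : ℂ) = 
      ∑ ρ : Equiv.Perm (Fin n), ((Equiv.Perm.sign ρ : ℤ) : ℂ) * ∏ b : Fin n, 
        ((Complex.I * (t b : ℂ) + (3 * (n : ℂ) - 2 * ((b : ℕ) + 1 : ℂ))) ^ ((ρ b : Fin n) : ℕ) * 
          (zeta (ε * t b) : ℂ)) := by
    intro t
    rw [vdm_eq_det, ← Matrix.det_transpose, Matrix.det_apply', Finset.sum_mul]
    refine Finset.sum_congr rfl fun ρ _ => ?_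
    rw [Finset.prod_mul_distrib, mul_assoc]
    congr 2
    refine Finset.prod_congr rfl fun b _ => ?_
    simp only [Matrix.transpose_apply, Matrix.vandermonde_apply, sigC]
    congr 1; ring
  simp only [h]
  refine integrable_finsetSum _ fun ρ _ => Integrable.const_mul ?_ _
  exact Integrable.fintype_prod (f := fun (b : Fin n) (s : ℝ) => 
    (Complex.I * (s : ℂ) + (3 * (n : ℂ) - 2 * ((b : ℕ) + 1 : ℂ))) ^ ((ρ b : Fin n) : ℕ) * 
          (zeta (ε * s) : ℂ)) fun b => zeta_int n hn zeta hzc C hC ε hε _ _ (ρ b).2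

lemma Edet_bound (n : ℕ) (a : Fin n → ℝ) : ∃ K : ℝ, 0 ≤ K ∧ ∀ t, ‖Edet n t a‖ ≤ K := by
  refine ⟨∑ σ : Equiv.Perm (Fin n), ∏ i, Real.exp ((-ex n (σ i) - 1) * Real.log (a i)), by positivity, 
    fun t => ?_⟩
  unfold Edet
  rw [Matrix.det_apply']
  refine (norm_sum_le _ _).trans (Finset.sum_le_sum fun σ _ => ?_)
  rw [norm_sign_mul, norm_prod]
  refine Finset.prod_le_prod (fun _ _ => norm_nonneg _) fun i _ => ?_
  simp [Complex.norm_exp]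

lemma det_meas {n : ℕ} {α : Type*} [MeasurableSpace α] (M : α → Matrix (Fin n) (Fin n) ℂ)
    (hM : ∀ i j, Measurable (fun x => M x i j)) : Measurable (fun x => (M x).det) := by
  simp only [Matrix.det_apply']
  refine Finset.measurable_fun_sum _ fun σ _ => Measurable.const_mul ?_ _
  exact Finset.measurable_fun_prod _ fun i _ => hM _ _

lemma fubini_int (n : ℕ) (hn : 1 ≤ n) (p : (Fin n → ℝ) → ℝ) (hp : IntegrableOn p (posS n))
    (zeta : ℝ → ℝ) (hzc : Continuous zeta)
    (C : ℝ) (hC : ∀ z, |zeta z| * (1 + z ^ 2) ^ n ≤ C) (ε : ℝ) (hε : 0 < ε) (a : Fin n → ℝ) :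
    Integrable (Function.uncurry fun (t y : Fin n → ℝ) => 
      ((p y / (vdm fun j => (y j) ^ 2) : ℝ) : ℂ) * 
        (Ddet n t y * (∏ l, (zeta (ε * t l) : ℂ)) * Edet n t a)) 
      (volume.prod (volume.restrict (posS n))) := by
  obtain ⟨K, hK0, hK⟩ := Edet_bound n a
  have hb : Integrable (fun z : (Fin n → ℝ) × (Fin n → ℝ) => 
      (K * ‖vdm (sigC n z.1) * ∏ l, (zeta (ε * z.1 l) : ℂ)‖) * ‖p z.2‖) 
      (volume.prod (volume.restrict (posS n))) := 
    Integrable.mul_prod (f := fun t => K * ‖vdm (sigC n t) * ∏ l, (zeta (ε * t l) : ℂ)‖)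
     (g := fun y => ‖p y‖) ((vdm_zeta_int n hn zeta hzc C hC ε hε).norm.const_mul _) hp.norm
  refine hb.mono' ?_ ?_
  · have hpm : AEStronglyMeasurable (fun z : (Fin n → ℝ) × (Fin n → ℝ) => p z.2) 
        (volume.prod (volume.restrict (posS n))) := hp.1.comp_snd
    have hD : Measurable (fun z : (Fin n → ℝ) × (Fin n → ℝ) => Ddet n z.1 z.2) := by
      refine det_meas _ fun i j => ?_
      simp only [Matrix.of_apply]
      fun_prop
    have hE : Measurable (fun z : (Fin n → ℝ) × (Fin n → ℝ) => Edet n z.1 a) := by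
      refine det_meas _ fun i j => ?_
      simp only [Matrix.of_apply]
      fun_prop
    have hZ : Measurable (fun z : (Fin n → ℝ) × (Fin n → ℝ) => ∏ l, (zeta (ε * z.1 l) : ℂ)) := by
      have := hzc.measurable
      fun_prop
    have hV : Measurable (fun z : (Fin n → ℝ) × (Fin n → ℝ) => (vdm fun j => (z.2 j) ^ 2 : ℝ)) := by
      unfold vdm; fun_prop
    have h1 : AEStronglyMeasurable (fun z : (Fin n → ℝ) × (Fin n → ℝ) => 
        ((p z.2 / (vdm fun j => (z.2 j) ^ 2) : ℝ) : ℂ)) (volume.prod (volume.restrict (posS n))) := 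
      Complex.continuous_ofReal.comp_aestronglyMeasurable 
        (hpm.aemeasurable.div hV.aemeasurable).aestronglyMeasurable
    exact h1.mul ((hD.mul hZ).mul hE).aestronglyMeasurable
  · have : ∀ᵐ z ∂(volume.prod (volume.restrict (posS n)) : Measure ((Fin n → ℝ) × (Fin n → ℝ))), 
        z.2 ∈ posS n := 
      Measure.quasiMeasurePreserving_snd.ae (ae_restrict_mem (posS_meas n))
    filter_upwards [this] with z hz
    simp only [Function.uncurry]
    rw [norm_mul, norm_mul, norm_mul, norm_mul, Complex.norm_real, norm_div, Real.norm_eq_abs (vdm _)]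
    by_cases hv : (vdm fun j => (z.2 j) ^ 2 : ℝ) = 0
    · rw [hv]; simp; positivity
    · have hinj : Function.Injective z.2 := by
        intro i j hij
        by_contra hne
        apply hv
        rcases lt_or_gt_of_ne hne with h | h
        · exact Finset.prod_eq_zero (i := (i, j)) (by simpa using h) (by simp [hij])
        · exact Finset.prod_eq_zero (i := (j, i)) (by simpa using h) (by simp [hij])
      have h1 := Ddet_bound n z.1 z.2 hz hinj
      have h2 := hK z.1
      have hv' : 0 < |(vdm fun j => (z.2 j) ^ 2 : ℝ)| := abs_pos.2 hv
      calc _ ≤ ‖p z.2‖ / |(vdm fun j => (z.2 j) ^ 2 : ℝ)| * 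
            ((‖vdm (sigC n z.1)‖ * |vdm fun j => (z.2 j) ^ 2|) * ‖∏ l, (zeta (ε * z.1 l) : ℂ)‖ * K) := by
            gcongr
        _ = _ := by field_simp

def hh (n : ℕ) (a : Fin n → ℝ) (τ : Equiv.Perm (Fin n)) (y : Fin n → ℝ) : ℝ :=
  (vdm fun j => (y j) ^ 2)⁻¹ * 
    ∏ c, Real.exp ((ex n (τ.symm c) + 1) * (Real.log (y c) - Real.log (a c)))

lemma hh_meas (n : ℕ) (a : Fin n → ℝ) (τ : Equiv.Perm (Fin n)) : Measurable (hh n a τ) := by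
  have hV : Measurable (fun z : (Fin n → ℝ) => (vdm fun j => (z j) ^ 2 : ℝ)) := by
      unfold vdm; fun_prop
  unfold hh
  fun_prop

lemma hh_cont (n : ℕ) (a : Fin n → ℝ) (ha : ∀ i, 0 < a i) (hv : (vdm fun j => (a j) ^ 2 : ℝ) ≠ 0)
    (τ : Equiv.Perm (Fin n)) : ContinuousAt (hh n a τ) a := by
  have hV : Continuous (fun z : (Fin n → ℝ) => (vdm fun j => (z j) ^ 2 : ℝ)) := by
    unfold vdm; fun_prop
  unfold hh
  refine (hV.continuousAt.inv₀ hv).mul (tendsto_finset_prod _ fun c _ => ?_)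
  have h1 : ContinuousAt (fun y : Fin n → ℝ => Real.log (y c)) a := 
    ContinuousAt.log (continuous_apply c).continuousAt (ha c).ne'
  exact ((continuousAt_const.mul (h1.sub continuousAt_const)).rexp)

lemma hh_self (n : ℕ) (a : Fin n → ℝ) (τ : Equiv.Perm (Fin n)) : 
    hh n a τ a = (vdm fun j => (a j) ^ 2)⁻¹ := by simp [hh]

lemma term_comp (n : ℕ) (f : (Fin n → ℝ) → ℝ) 
    (hsym : ∀ (e : Equiv.Perm (Fin n)) (a : Fin n → ℝ), f (a ∘ e) = f a)
    (a : Fin n → ℝ) (ε : ℝ) (ρ τ : Equiv.Perm (Fin n)) (y : Fin n → ℝ) :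
    (fun y => f y / (vdm fun j => (y j) ^ 2) * GG n a ε ρ τ y) (y ∘ (ρ.symm.trans τ)) = 
      f y * hh n a τ y * KK n a ε y := by
  simp only
  rw [hsym]
  have h1 := vdm_perm (fun j => (y j) ^ 2) (ρ.symm.trans τ)
  have h2 : (vdm fun j => ((y ∘ (ρ.symm.trans τ)) j) ^ 2) = 
    (((Equiv.Perm.sign ρ : ℤ) : ℝ) * ((Equiv.Perm.sign τ : ℤ) : ℝ)) * vdm (fun j => (y j) ^ 2) := by
    simp only [Function.comp]
    rw [h1]
    simp [Equiv.Perm.sign_trans, mul_comm]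
  have h3 : GG n a ε ρ τ (y ∘ (ρ.symm.trans τ)) = 
      (((Equiv.Perm.sign ρ : ℤ) : ℝ) * ((Equiv.Perm.sign τ : ℤ) : ℝ)) * (KK n a ε y * 
        ∏ c, Real.exp ((ex n (τ.symm c) + 1) * (Real.log (y c) - Real.log (a c)))) := by
    unfold GG KK
    congr 1
    rw [← Finset.prod_mul_distrib]
    refine Eq.trans ?_ (Equiv.prod_comp τ (fun c => kap n ε (a c) (y c) *
      Real.exp ((ex n (τ.symm c) + 1) * (Real.log (y c) - Real.log (a c)))))
    refine Finset.prod_congr rfl fun b _ => ?_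
    simp
  rw [h2, h3, hh]
  rcases Int.units_eq_one_or (Equiv.Perm.sign ρ) with h | h <;> 
    rcases Int.units_eq_one_or (Equiv.Perm.sign τ) with h' | h' <;> 
    simp only [h, h'] <;> push_cast <;> ring

lemma perm_mp (n : ℕ) (e : Equiv.Perm (Fin n)) : 
    MeasurePreserving (fun y : Fin n → ℝ => y ∘ e) ∧ 
    MeasurableEmbedding (fun y : Fin n → ℝ => y ∘ e) := by
  have h := volume_measurePreserving_piCongrLeft (fun _ : Fin n => ℝ) e.symm
  have h2 := (MeasurableEquiv.piCongrLeft (fun _ : Fin n => ℝ) e.symm).measurableEmbedding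
  have : (MeasurableEquiv.piCongrLeft (fun _ : Fin n => ℝ) e.symm : (Fin n → ℝ) → (Fin n → ℝ)) = 
    fun y => y ∘ e := by
    funext y i
    have := Equiv.piCongrLeft_apply_apply (fun _ : Fin n => ℝ) e.symm y (e i)
    simpa [MeasurableEquiv.coe_piCongrLeft] using this
  rw [this] at h h2
  exact ⟨h, h2⟩

lemma ae_inj (n : ℕ) : ∀ᵐ a : Fin n → ℝ, Function.Injective a := by
  have : ∀ i j : Fin n, i ≠ j → ∀ᵐ a : Fin n → ℝ, a i ≠ a j := by
    intro i j hij
    let W : Submodule ℝ (Fin n → ℝ) := LinearMap.ker 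
      ((LinearMap.proj i : (Fin n → ℝ) →ₗ[ℝ] ℝ) - LinearMap.proj j)
    have hW : W ≠ ⊤ := by
      intro h
      have : (Pi.single i 1 : Fin n → ℝ) ∈ W := by rw [h]; trivial
      simp [W, hij.symm] at this
    have := Measure.addHaar_submodule (volume : Measure (Fin n → ℝ)) W hW
    rw [ae_iff]
    convert! this using 2
    ext a
    simp [W, sub_eq_zero]
  have h2 : ∀ᵐ a : Fin n → ℝ, ∀ i j : Fin n, i ≠ j → a i ≠ a j := by
    rw [ae_all_iff]; intro i
    rw [ae_all_iff]; intro j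
    by_cases h : i = j
    · exact Eventually.of_forall fun a h' => absurd h h'
    · filter_upwards [this i j h] with a ha _ using ha
  filter_upwards [h2] with a ha i j hij
  by_contra h
  exact ha i j h hij

/-- Lemma 2.8: inversion of the spherical transform `S_Φ`:
for almost every `a ∈ (0,∞)ⁿ`,
`p(a) = Δ_n(a²)/((n!)²∏ 2^j j!) · lim_{ε→0⁺} (2π)^{-n} ∫_{ℝⁿ} Ŝp(σ(t)) ∏ ζ(ε t_l)
  Δ_n(σ(t)) det[a_c^{-i t_b-2n+2b-1}] dt`. -/
theorem spherical_transform_inversion (n : ℕ) (hn : 1 ≤ n)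
    (p : (Fin n → ℝ) → ℝ)
    (hpInt : IntegrableOn p {a : Fin n → ℝ | ∀ j, 0 < a j})
    (hpSym : ∀ (e : Equiv.Perm (Fin n)) (a : Fin n → ℝ), p (a ∘ e) = p a)
    (hconv : ∀ t : Fin n → ℝ, IntegrableOn
      (fun a : Fin n → ℝ =>
        ((p a * (∏ j, a j) ^ (-(2 * (n : ℝ) - 1)) : ℝ) : ℂ) *
          (Matrix.of fun b c : Fin n => cpw (a c) (sigC n t b + (n : ℂ) - 1)).det /
            (((vdm fun j => (a j) ^ 2 : ℝ) : ℂ) * vdm (sigC n t)))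
      {a : Fin n → ℝ | ∀ j, 0 < a j})
    (zeta : ℝ → ℝ) (hzc : Continuous zeta)
    (hzeq : ∀ z : ℝ, (∀ k ∈ Finset.range n, 4 * z ^ 2 ≠ (π * (2 * (k : ℝ) + 1)) ^ 2) →
      zeta z = Real.cos z /
        ∏ k ∈ Finset.range n, (1 - 4 * z ^ 2 / (π * (2 * (k : ℝ) + 1)) ^ 2)) :
    ∀ᵐ a : Fin n → ℝ, (∀ j, 0 < a j) →
      Tendsto
        (fun ε : ℝ =>
          (((vdm fun j => (a j) ^ 2 : ℝ) /
              ((Nat.factorial n : ℝ) ^ 2 *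
                (∏ j ∈ Finset.range n, 2 ^ j * Nat.factorial j : ℕ)) : ℝ) : ℂ) *
            ((2 * (π : ℂ)) ^ n)⁻¹ *
              ∫ t : Fin n → ℝ,
                ShatP n p t * (∏ l, (zeta (ε * t l) : ℂ)) * vdm (sigC n t) *
                  (Matrix.of fun b c : Fin n =>
                    cpw (a c)
                      (-Complex.I * (t b : ℂ) - 2 * (n : ℂ) + 2 * ((b : ℕ) + 1 : ℂ) - 1)).det)
        (𝓝[>] (0 : ℝ)) (𝓝 ((p a : ℝ) : ℂ)) := by
  have hCb := zeta_bound n hn zeta hzc hzeq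
  obtain ⟨C, hC⟩ := hCb
  have hz : ∀ z, zeta z = ∫ x, phi n x * Real.cos (z * x) := fun z => by
    rw [zeta_eq n hn zeta hzc hzeq, phi_cos]
  have hzi : Integrable zeta := by
    have := (zeta_int n hn zeta hzc C hC 1 one_pos 0 0 (by omega)).re
    simpa using this
  set f : (Fin n → ℝ) → ℝ := (posS n).indicator p with hfdef
  have hf : Integrable f := IntegrableOn.integrable_indicator hpInt (posS_meas n)
  have hfsym : ∀ (e : Equiv.Perm (Fin n)) (a : Fin n → ℝ), f (a ∘ e) = f a := by
    intro e a
    have : a ∘ e ∈ posS n ↔ a ∈ posS n :=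
      ⟨fun h j => by simpa using h (e.symm j), fun h j => h (e j)⟩
    by_cases h : a ∈ posS n
    · rw [hfdef, Set.indicator_of_mem h, Set.indicator_of_mem (this.2 h), hpSym]
    · rw [hfdef, Set.indicator_of_notMem h, Set.indicator_of_notMem (fun h' => h (this.1 h'))]
  filter_upwards [ae_inj n, IsUnifLocDoublingMeasure.ae_tendsto_average_norm_sub volume
    hf.locallyIntegrable 1] with a hinj hleb ha
  have hL : Tendsto (fun δ => ⨍ y in Metric.closedBall a δ, ‖f y - f a‖) (𝓝[>] 0) (𝓝 0) := by
    refine hleb (l := 𝓝[>] (0 : ℝ)) (fun _ => a) (fun δ => δ) tendsto_id ?_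
    filter_upwards [self_mem_nhdsWithin] with δ hδ
    exact Metric.mem_closedBall_self (by simpa using (le_of_lt hδ))
  have hv : (vdm fun j => (a j) ^ 2 : ℝ) ≠ 0 := by
    refine vdm_ne_zero _ fun i j hij => hinj ?_
    exact (pow_left_inj₀ (ha i).le (ha j).le two_ne_zero).1 hij
  have hfa : f a = p a := Set.indicator_of_mem (show a ∈ posS n from ha) _
  have key : ∀ τ, (∀ᶠ ε in 𝓝[>] (0 : ℝ), Integrable (fun y => f y * hh n a τ y * KK n a ε y)) ∧
      Tendsto (fun ε => ∫ y, f y * hh n a τ y * KK n a ε y) (𝓝[>] 0) (𝓝 (f a * hh n a τ a)) :=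
    fun τ => approx_main f hf a ha hL (hh n a τ) (hh_meas n a τ) (hh_cont n a ha hv τ)
  have hlim : Tendsto (fun ε => ((((vdm fun j => (a j) ^ 2 : ℝ) / (Nat.factorial n : ℝ) ^ 2) *
      ∑ ρ : Equiv.Perm (Fin n), ∑ τ : Equiv.Perm (Fin n),
        ∫ y, f y * hh n a τ y * KK n a ε y : ℝ) : ℂ)) (𝓝[>] 0) (𝓝 ((p a : ℝ) : ℂ)) := by
    have h1 : Tendsto (fun ε => (((vdm fun j => (a j) ^ 2 : ℝ) / (Nat.factorial n : ℝ) ^ 2) *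
      ∑ ρ : Equiv.Perm (Fin n), ∑ τ : Equiv.Perm (Fin n),
        ∫ y, f y * hh n a τ y * KK n a ε y : ℝ)) (𝓝[>] 0)
        (𝓝 (((vdm fun j => (a j) ^ 2 : ℝ) / (Nat.factorial n : ℝ) ^ 2) *
      ∑ ρ : Equiv.Perm (Fin n), ∑ τ : Equiv.Perm (Fin n), f a * hh n a τ a)) :=
      Tendsto.const_mul _ (tendsto_finset_sum _ fun ρ _ => tendsto_finset_sum _ fun τ _ => (key τ).2)
    have h2 : ((vdm fun j => (a j) ^ 2 : ℝ) / (Nat.factorial n : ℝ) ^ 2) *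
      ∑ ρ : Equiv.Perm (Fin n), ∑ τ : Equiv.Perm (Fin n), f a * hh n a τ a = p a := by
      have : (Nat.factorial n : ℝ) ≠ 0 := by positivity
      simp only [hh_self, Finset.sum_const, Finset.card_univ, Fintype.card_perm, Fintype.card_fin,
        nsmul_eq_mul, hfa]
      field_simp
    rw [h2] at h1
    exact (Complex.continuous_ofReal.tendsto _).comp h1
  refine hlim.congr' ?_
  have hall : ∀ᶠ ε in 𝓝[>] (0 : ℝ), ∀ τ,
      Integrable (fun y => f y * hh n a τ y * KK n a ε y) :=
    eventually_all.2 fun τ => (key τ).1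
  filter_upwards [hall, self_mem_nhdsWithin] with ε hεi hε
  have hε : 0 < ε := hε
  have hterm : ∀ ρ τ : Equiv.Perm (Fin n),
      Integrable (fun y => f y / (vdm fun j => (y j) ^ 2) * GG n a ε ρ τ y) ∧
      ∫ y, f y / (vdm fun j => (y j) ^ 2) * GG n a ε ρ τ y =
        ∫ y, f y * hh n a τ y * KK n a ε y := by
    intro ρ τ
    obtain ⟨hmp, hme⟩ := perm_mp n (ρ.symm.trans τ)
    have hc : (fun y => f y / (vdm fun j => (y j) ^ 2) * GG n a ε ρ τ y) ∘
        (fun y : Fin n → ℝ => y ∘ (ρ.symm.trans τ)) = fun y => f y * hh n a τ y * KK n a ε y := by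
      funext y
      exact term_comp n f hfsym a ε ρ τ y
    constructor
    · rw [← hmp.integrable_comp_emb hme, hc]
      exact hεi τ
    · rw [← hmp.integral_comp hme]
      exact congrArg (fun g => ∫ y, g y) hc
  set c0 : ℕ := ∏ j ∈ Finset.range n, 2 ^ j * Nat.factorial j with hc0
  have hc0ne : (c0 : ℂ) ≠ 0 := by
    have : 0 < c0 := Finset.prod_pos fun j _ => by positivity
    exact_mod_cast this.ne'
  have hE : ∀ t : Fin n → ℝ, (Matrix.of fun b c : Fin n => cpw (a c)
      (-Complex.I * (t b : ℂ) - 2 * (n : ℂ) + 2 * ((b : ℕ) + 1 : ℂ) - 1)).det = Edet n t a := by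
    intro t
    unfold Edet
    congr 1
    ext b c
    simp only [Matrix.of_apply, cpw, if_neg (ha c).ne']
    congr 2
    simp only [ex]
    push_cast
    ring
  have hint : (∫ t : Fin n → ℝ,
                ShatP n p t * (∏ l, (zeta (ε * t l) : ℂ)) * vdm (sigC n t) *
                  (Matrix.of fun b c : Fin n =>
                    cpw (a c)
                      (-Complex.I * (t b : ℂ) - 2 * (n : ℂ) + 2 * ((b : ℕ) + 1 : ℂ) - 1)).det) =
      (c0 : ℂ) * (((2 * π) ^ n * ∑ ρ : Equiv.Perm (Fin n), ∑ τ : Equiv.Perm (Fin n),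
        ∫ y, f y * hh n a τ y * KK n a ε y : ℝ) : ℂ) := by
    have e1 : ∀ t : Fin n → ℝ, ShatP n p t * (∏ l, (zeta (ε * t l) : ℂ)) * vdm (sigC n t) *
        (Matrix.of fun b c : Fin n => cpw (a c)
          (-Complex.I * (t b : ℂ) - 2 * (n : ℂ) + 2 * ((b : ℕ) + 1 : ℂ) - 1)).det =
        (c0 : ℂ) * ∫ y in posS n, ((p y / (vdm fun j => (y j) ^ 2) : ℝ) : ℂ) *
          (Ddet n t y * (∏ l, (zeta (ε * t l) : ℂ)) * Edet n t a) := by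
      intro t
      rw [hE, mul_right_comm (ShatP n p t), ShatP_eq, mul_assoc, mul_assoc, ← integral_mul_const]
      congr 1
      refine integral_congr_ae (Eventually.of_forall fun y => ?_)
      simp only
      ring
    simp only [e1]
    rw [integral_const_mul, integral_integral_swap (fubini_int n hn p hpInt zeta hzc C hC ε hε a)]
    congr 1
    have e2 : ∀ y ∈ posS n, ∫ t : Fin n → ℝ, ((p y / (vdm fun j => (y j) ^ 2) : ℝ) : ℂ) *
          (Ddet n t y * (∏ l, (zeta (ε * t l) : ℂ)) * Edet n t a) =
        (((2 * π) ^ n * ∑ ρ, ∑ τ, p y / (vdm fun j => (y j) ^ 2) * GG n a ε ρ τ y : ℝ) : ℂ) := by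
      intro y hy
      rw [integral_const_mul, inner_eq n zeta hzc hz hzi ε hε a y ha hy, ← Complex.ofReal_mul]
      congr 1
      simp only [← Finset.mul_sum]
      ring
    rw [setIntegral_congr_fun (posS_meas n) e2, integral_complex_ofReal]
    congr 1
    rw [integral_const_mul, ← integral_indicator (posS_meas n)]
    congr 1
    have e3 : (posS n).indicator (fun y => ∑ ρ : Equiv.Perm (Fin n), ∑ τ : Equiv.Perm (Fin n),
        p y / (vdm fun j => (y j) ^ 2) * GG n a ε ρ τ y) =
        fun y => ∑ ρ : Equiv.Perm (Fin n), ∑ τ : Equiv.Perm (Fin n),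
          f y / (vdm fun j => (y j) ^ 2) * GG n a ε ρ τ y := by
      funext y
      by_cases h : y ∈ posS n
      · simp [hfdef, h]
      · simp [hfdef, h]
    rw [e3, integral_finsetSum _ fun ρ _ => integrable_finsetSum _ fun τ _ => (hterm ρ τ).1]
    refine Finset.sum_congr rfl fun ρ _ => ?_
    rw [integral_finsetSum _ fun τ _ => (hterm ρ τ).1]
    exact Finset.sum_congr rfl fun τ _ => (hterm ρ τ).2
  rw [hint]
  have hpi : (π : ℂ) ≠ 0 := by exact_mod_cast Real.pi_ne_zero
  have hfac : (Nat.factorial n : ℂ) ≠ 0 := by exact_mod_cast (Nat.factorial_pos n).ne'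
  generalize (∑ ρ : Equiv.Perm (Fin n), ∑ τ : Equiv.Perm (Fin n),
        ∫ y, f y * hh n a τ y * KK n a ε y) = S
  simp only [Complex.ofReal_mul, Complex.ofReal_div, Complex.ofReal_pow, Complex.ofReal_natCast,
    Complex.ofReal_ofNat]
  field_simp

end
end
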